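/- arXiv:2408.15592 — 3 statements merged into one kernel-verified Lean document; each statement's English description precedes it below -/
import Mathlib

section
/- Suppose m ≥ 2. Let C be an [n,k] rank metric code with n ≥ k ≥ 1, and let r ∈ {1,…,k−1} be such that n ≥ (m−1)r + k. Then C is r-minimal if and only if d_{n−(m−1)r−k+1}(C^⊥) ≥ n − mr + 1, where C^⊥ is the dual code of C (an [n, n−k] code). -/
open Submodule Pointwise

/-- The coordinatewise inclusion of `F^n` into `E^n`. -/
noncomputable def fIncl (F E : Type*) [Field F] [Field E] [Algebra F E] (n : ℕ) :
    (Fin n → F) →ₗ[F] (Fin n → E) :=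
  LinearMap.compLeft (Algebra.linearMap F E) (Fin n)

/-- The rank support `χ(A)` of `A ⊆ E^n`: the smallest `F`-subspace `U` of `F^n`
such that `A` is contained in the `E`-span of (the image in `E^n` of) `U`. -/
noncomputable def rankSupport (F E : Type*) [Field F] [Field E] [Algebra F E] (n : ℕ)
    (A : Set (Fin n → E)) : Submodule F (Fin n → F) :=
  sInf {U : Submodule F (Fin n → F) |
    A ⊆ (Submodule.span E (fIncl F E n '' (U : Set (Fin n → F))) : Set (Fin n → E))}

/-- The rank support weight `wt(A) = dim_F χ(A)`. -/
noncomputable def wt (F E : Type*) [Field F] [Field E] [Algebra F E] (n : ℕ)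
    (A : Set (Fin n → E)) : ℕ :=
  Module.finrank F (rankSupport F E n A)

/-- `D` is rank minimal in `C`: any subcode `B ≤ C` of the same dimension with
`χ(B) ⊆ χ(D)` satisfies `χ(B) = χ(D)`. -/
def RankMinimal (F E : Type*) [Field F] [Field E] [Algebra F E] (n : ℕ)
    (C D : Submodule E (Fin n → E)) : Prop :=
  ∀ B : Submodule E (Fin n → E), B ≤ C → Module.finrank E B = Module.finrank E D →
    rankSupport F E n (B : Set (Fin n → E)) ≤ rankSupport F E n (D : Set (Fin n → E)) →
    rankSupport F E n (B : Set (Fin n → E)) = rankSupport F E n (D : Set (Fin n → E))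

/-- `C` is `r`-minimal with respect to the rank metric. -/
def IsRMinimal (F E : Type*) [Field F] [Field E] [Algebra F E] (n : ℕ)
    (C : Submodule E (Fin n → E)) (r : ℕ) : Prop :=
  ∀ D : Submodule E (Fin n → E), D ≤ C → Module.finrank E D = r → RankMinimal F E n C D

/-- The `r`-th generalized rank weight of a code `C ≤ E^n`. -/
noncomputable def grw (F E : Type*) [Field F] [Field E] [Algebra F E] (n : ℕ)
    (C : Submodule E (Fin n → E)) (r : ℕ) : ℕ :=
  sInf {w : ℕ | ∃ D : Submodule E (Fin n → E), D ≤ C ∧ Module.finrank E D = r ∧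
    wt F E n (D : Set (Fin n → E)) = w}

/-- The dual `B^⊥` of `B ≤ E^k` with respect to the standard bilinear form. -/
noncomputable def dualSub (E : Type*) [Field E] (k : ℕ) (B : Submodule E (Fin k → E)) :
    Submodule E (Fin k → E) :=
  ⨅ γ ∈ B, LinearMap.ker (∑ i, γ i • (LinearMap.proj i : (Fin k → E) →ₗ[E] E))

/-!
Fix a nonzero functional `φ₀ : E → F`. Every other functional is `x ↦ φ₀ (e * x)` for some `e : E`,
so the support of a code `D` is simply `φ₀(D)`, and `wt D ≤ m * dim D`.

A nonzero code `W` always has a hyperplane of smaller support. If moreover `dim W = r + 1` and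
`wt W ≤ m * r`, then `W` also has a hyperplane of full support: the kernel of `φ₀` on `W` has
`F`-dimension at least `m`, and since a transitive space of linear maps `A → B` with
`dim A ≤ dim B` contains an injective one, some `E`-linear functional on `W` maps this kernel onto
`E`; its own kernel is the required hyperplane. Thus `r`-minimality forces `d_{r+1}(C) > m * r`.
Conversely, if `D ≠ B` have dimension `r` and `χ(B) ⊆ χ(D)`, then `D + B` contains a code of
dimension `r + 1` and of weight at most `wt D ≤ m * r`.

The comparison of `C ∩ U_E` with `C^⊥ ∩ (U^⊥)_E`, where `U_E` is the `E`-span of `U ⊆ F^n`, turns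
`d_{r+1}(C) > m * r` into the bound on `C^⊥`, as in Wei's duality for Hamming weights.
-/

section GenericRank

open Module

variable {K V W : Type*} [Field K] [AddCommGroup V] [Module K V] [AddCommGroup W] [Module K W]

lemma exists_le_finrank_eq {Y : Submodule K V} {s : ℕ} (hs : s ≤ finrank K Y) :
    ∃ Z ≤ Y, finrank K Z = s := by
  obtain ⟨v, hv⟩ := exists_linearIndependent_of_le_finrank hs
  refine ⟨(span K (Set.range v)).map Y.subtype, map_subtype_le _ _, ?_⟩
  rw [finrank_map_subtype_eq, finrank_span_eq_card hv, Fintype.card_fin]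

lemma exists_ge_finrank_eq [FiniteDimensional K V] {X : Submodule K V} {s : ℕ}
    (hX : finrank K X ≤ s) (hs : s ≤ finrank K V) :
    ∃ Z, X ≤ Z ∧ finrank K Z = s := by
  obtain ⟨Y, hXY⟩ := X.exists_isCompl
  have hdim := finrank_add_eq_of_isCompl hXY
  obtain ⟨Z, hZY, hZ⟩ := exists_le_finrank_eq (Y := Y) (s := s - finrank K X) (by omega)
  refine ⟨X ⊔ Z, le_sup_left, ?_⟩
  have hsup := finrank_sup_add_finrank_inf_eq X Z
  rw [(hXY.disjoint.mono_right hZY).eq_bot, finrank_bot] at hsup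
  omega

lemma exists_injective_smul_add [Infinite K] [FiniteDimensional K V] {f : V →ₗ[K] W}
    (hf : Function.Injective f) (g : V →ₗ[K] W) :
    ∃ t : K, Function.Injective (t • f + g) := by
  obtain ⟨L, hL⟩ := f.exists_leftInverse_of_injective (LinearMap.ker_eq_bot.2 hf)
  obtain ⟨t, ht⟩ := (End.finite_hasEigenvalue (L ∘ₗ g)).exists_notMem
  refine ⟨-t, LinearMap.ker_eq_bot.1 (LinearMap.ker_eq_bot'.2 fun x hx => ?_)⟩
  by_contra hx0
  refine ht (End.hasEigenvalue_of_hasEigenvector (x := x) ⟨End.mem_eigenspace_iff.2 ?_, hx0⟩)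
  have hLf : L (f x) = x := LinearMap.congr_fun hL x
  have hLx : -(t • x) + L (g x) = 0 := by simpa [hLf] using congrArg L hx
  exact (neg_add_eq_zero.1 hLx).symm

lemma exists_finrank_range_lt_finrank_range_smul_add [Infinite K] [FiniteDimensional K V]
    {f g : V →ₗ[K] W} {x : V} (hfx : f x = 0) (hgx : g x ∉ LinearMap.range f) :
    ∃ t : K, finrank K (LinearMap.range f) < finrank K (LinearMap.range (t • f + g)) := by
  obtain ⟨s, hs⟩ := f.rangeRestrict.exists_rightInverse_of_surjective f.range_rangeRestrict
  have hfs (y : LinearMap.range f) : f (s y) = y :=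
    congrArg Subtype.val (LinearMap.congr_fun hs y)
  -- For generic `t` the range of `t • f + g` contains a copy of `range f × K`, the extra line being
  -- spanned by `g x`.
  let f' : LinearMap.range f × K →ₗ[K] W :=
    (LinearMap.range f).subtype.coprod (LinearMap.toSpanSingleton K W (g x))
  have hf' : Function.Injective f' := by
    refine LinearMap.ker_eq_bot.1 (LinearMap.ker_eq_bot'.2 fun ⟨y, c⟩ hyc => ?_)
    replace hyc : (y : W) + c • g x = 0 := by simpa [f'] using hyc
    obtain rfl : c = 0 := by
      by_contra hc
      refine hgx (((LinearMap.range f).smul_mem_iff hc).1 ?_)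
      rw [eq_neg_of_add_eq_zero_right hyc]
      exact neg_mem y.2
    simpa using hyc
  obtain ⟨t, ht⟩ := exists_injective_smul_add hf' (g ∘ₗ s ∘ₗ LinearMap.fst K _ K)
  have hrange : LinearMap.range (t • f' + g ∘ₗ s ∘ₗ LinearMap.fst K _ K) ≤
      LinearMap.range (t • f + g) := by
    rintro _ ⟨⟨y, c⟩, rfl⟩
    refine ⟨s y + (t * c) • x, ?_⟩
    simp only [LinearMap.add_apply, LinearMap.smul_apply, map_add, hfs, map_smul, hfx, smul_zero,
      LinearMap.coprod_apply, subtype_apply, LinearMap.toSpanSingleton_apply, smul_add, smul_smul,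
      LinearMap.coe_comp, LinearMap.coe_fst, Function.comp_apply, f']
    abel
  refine ⟨t, ?_⟩
  calc finrank K (LinearMap.range f) < finrank K (LinearMap.range f × K) := by simp
    _ = _ := (LinearMap.finrank_range_of_inj ht).symm
    _ ≤ _ := finrank_mono hrange

end GenericRank

section TransitiveFamily

open Module

variable {F X A B : Type*} [Field F] [AddCommGroup X] [Module F X] [AddCommGroup A] [Module F A]
  [AddCommGroup B] [Module F B] [FiniteDimensional F A]

-- If `T x` has maximal rank, then every `T y` maps the kernel of `T x` into its range.
lemma exists_injective_of_transitive_of_infinite [Infinite F] (T : X →ₗ[F] A →ₗ[F] B)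
    (hT : ∀ a ≠ 0, Function.Surjective fun x => T x a) (hAB : finrank F A ≤ finrank F B) :
    ∃ x, Function.Injective (T x) := by
  let rank (x : X) : ℕ := finrank F (LinearMap.range (T x))
  have hbdd : BddAbove (Set.range rank) :=
    ⟨finrank F A, Set.forall_mem_range.2 fun x => (T x).finrank_range_le⟩
  obtain ⟨x, hx⟩ := Nat.sSup_mem (Set.range_nonempty rank) hbdd
  have hmax (y : X) : rank y ≤ rank x := hx ▸ le_csSup hbdd ⟨y, rfl⟩
  refine ⟨x, LinearMap.ker_eq_bot.1 (LinearMap.ker_eq_bot'.2 fun a ha => ?_)⟩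
  by_contra ha0
  have hsurj : LinearMap.range (T x) = ⊤ := by
    refine eq_top_iff.2 fun b _ => ?_
    obtain ⟨y, rfl⟩ := hT a ha0 b
    by_contra hy
    obtain ⟨t, ht⟩ := exists_finrank_range_lt_finrank_range_smul_add ha hy
    rw [← map_smul, ← map_add] at ht
    exact ht.not_ge (hmax _)
  have hker : 0 < finrank F (LinearMap.ker (T x)) :=
    finrank_pos_iff_exists_ne_zero.2 ⟨⟨a, ha⟩, fun h => ha0 (congrArg Subtype.val h)⟩
  have hrank := (T x).finrank_range_add_finrank_ker
  rw [hsurj, finrank_top] at hrank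
  omega

-- Each nonzero `a` is killed by a fraction `1 / |B|` of the maps, and there are fewer than `|B|`
-- such `a`.
lemma exists_injective_of_transitive_of_finite [Finite F] [FiniteDimensional F X]
    [FiniteDimensional F B] (T : X →ₗ[F] A →ₗ[F] B)
    (hT : ∀ a ≠ 0, Function.Surjective fun x => T x a)
    (hAB : finrank F A ≤ finrank F B) : ∃ x, Function.Injective (T x) := by
  have : Finite X := Module.finite_of_finite F
  have : Finite A := Module.finite_of_finite F
  have : Finite B := Module.finite_of_finite F
  have hcard : Nat.card A ≤ Nat.card B := by
    rw [natCard_eq_pow_finrank (K := F), natCard_eq_pow_finrank (K := F) (V := B)]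
    exact Nat.pow_le_pow_right Nat.card_pos hAB
  have hker (a : {a : A // a ≠ 0}) :
      Nat.card (LinearMap.ker (T.flip a)) * Nat.card B = Nat.card X := by
    rw [(LinearMap.ker (T.flip a)).card_eq_card_quotient_mul_card,
      Nat.card_congr ((T.flip a).quotKerEquivOfSurjective (hT a a.2)).toEquiv]
  by_contra! hinj
  have hcover : Function.Surjective
      fun p : (Σ a : {a : A // a ≠ 0}, LinearMap.ker (T.flip a)) => (p.2 : X) := by
    intro x
    obtain ⟨a, ha, ha0⟩ : ∃ a, T x a = 0 ∧ a ≠ 0 := by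
      simpa [injective_iff_map_eq_zero] using hinj x
    exact ⟨⟨⟨a, ha0⟩, x, ha⟩, rfl⟩
  have hnonzero : Nat.card {a : A // a ≠ 0} < Nat.card A :=
    Finite.card_subtype_lt (x := 0) (not_not.2 rfl)
  have := Fintype.ofFinite {a : A // a ≠ 0}
  have hle : Nat.card X * Nat.card B ≤ Nat.card X * Nat.card {a : A // a ≠ 0} :=
    calc Nat.card X * Nat.card B
      _ ≤ Nat.card (Σ a : {a : A // a ≠ 0}, LinearMap.ker (T.flip a)) * Nat.card B :=
        Nat.mul_le_mul_right _ (Nat.card_le_card_of_surjective _ hcover)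
      _ = Nat.card X * Nat.card {a : A // a ≠ 0} := by
        rw [Nat.card_sigma, Finset.sum_mul, Finset.sum_congr rfl fun a _ => hker a,
          Finset.sum_const, Finset.card_univ, smul_eq_mul, ← Nat.card_eq_fintype_card, mul_comm]
  have := Nat.le_of_mul_le_mul_left hle Nat.card_pos
  omega

lemma exists_injective_of_transitive [FiniteDimensional F X] [FiniteDimensional F B]
    (T : X →ₗ[F] A →ₗ[F] B)
    (hT : ∀ a ≠ 0, Function.Surjective fun x => T x a) (hAB : finrank F A ≤ finrank F B) :
    ∃ x, Function.Injective (T x) := by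
  rcases finite_or_infinite F with _ | _
  · exact exists_injective_of_transitive_of_finite T hT hAB
  · exact exists_injective_of_transitive_of_infinite T hT hAB

end TransitiveFamily

section Functionals

open Module

variable {F E V : Type*} [Field F] [Field E] [Algebra F E] [FiniteDimensional F E]
  [AddCommGroup V] [Module F V] [Module E V] [IsScalarTower F E V] [FiniteDimensional E V]

lemma exists_dual_map_eq_top {K : Submodule F V} (hK : finrank F E ≤ finrank F K) :
    ∃ ℓ : Dual E V, K.map (ℓ.restrictScalars F) = ⊤ := by
  obtain ⟨K', hK'K, hK'⟩ := exists_le_finrank_eq hK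
  have : FiniteDimensional F V := .trans F E V
  have : FiniteDimensional F (Dual E V) := .trans F E _
  let T : Dual E V →ₗ[F] K' →ₗ[F] E :=
    LinearMap.lcomp F E K'.subtype ∘ₗ LinearMap.restrictScalarsₗ F E V E F
  have hT (a : K') (ha : a ≠ 0) : Function.Surjective fun ℓ => T ℓ a := by
    intro c
    obtain ⟨ℓ, hℓ⟩ : ∃ ℓ : Dual E V, ℓ a ≠ 0 :=
      Projective.exists_dual_ne_zero E (by simpa using ha)
    exact ⟨(c / ℓ a) • ℓ, div_mul_cancel₀ c hℓ⟩
  obtain ⟨ℓ, hℓ⟩ := exists_injective_of_transitive T hT hK'.le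
  have hsurj := (LinearMap.injective_iff_surjective_of_finrank_eq_finrank hK').1 hℓ
  refine ⟨ℓ, eq_top_iff.2 fun c _ => ?_⟩
  obtain ⟨x, rfl⟩ := hsurj c
  exact mem_map_of_mem (hK'K x.2)

lemma exists_dual_apply_eq_apply_mul {φ₀ : Dual F E} (hφ₀ : φ₀ ≠ 0) (φ : Dual F E) :
    ∃ e : E, ∀ x, φ x = φ₀ (e * x) := by
  let Ψ : E →ₗ[F] Dual F E := (LinearMap.mul F E).compr₂ φ₀
  have hΨ : Function.Injective Ψ := by
    refine (injective_iff_map_eq_zero Ψ).2 fun e he => ?_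
    by_contra he0
    refine hφ₀ (LinearMap.ext fun x => ?_)
    simpa [Ψ, he0] using LinearMap.congr_fun he (e⁻¹ * x)
  obtain ⟨e, rfl⟩ := (LinearMap.injective_iff_surjective_of_finrank_eq_finrank
    Subspace.dual_finrank_eq.symm).1 hΨ φ
  exact ⟨e, fun x => rfl⟩

end Functionals

section Duality

open Module

variable {K : Type*} [Field K] {n : ℕ} {B : Submodule K (Fin n → K)} {x : Fin n → K}

lemma mem_dualSub : x ∈ dualSub K n B ↔ ∀ y ∈ B, y ⬝ᵥ x = 0 := by
  simp [dualSub, mem_iInf, dotProduct]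

lemma dualSub_eq_orthogonal (B : Submodule K (Fin n → K)) :
    dualSub K n B = LinearMap.BilinForm.orthogonal (dotProductBilin K K) B :=
  Submodule.ext fun _ => mem_dualSub

lemma isRefl_dotProductBilin :
    LinearMap.BilinForm.IsRefl (dotProductBilin K K : LinearMap.BilinForm K (Fin n → K)) :=
  fun x y h => (dotProduct_comm y x).trans h

lemma nondegenerate_dotProductBilin :
    LinearMap.BilinForm.Nondegenerate
      (dotProductBilin K K : LinearMap.BilinForm K (Fin n → K)) :=
  (LinearMap.IsRefl.nondegenerate_iff_separatingLeft (isRefl_dotProductBilin (K := K) (n := n))).2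
    dotProduct_eq_zero

lemma finrank_dualSub_add_finrank (B : Submodule K (Fin n → K)) :
    finrank K (dualSub K n B) + finrank K B = n := by
  have hB := B.finrank_le
  rw [dualSub_eq_orthogonal,
    LinearMap.BilinForm.finrank_orthogonal nondegenerate_dotProductBilin]
  rw [finrank_fin_fun] at hB ⊢
  omega

lemma dualSub_dualSub (B : Submodule K (Fin n → K)) : dualSub K n (dualSub K n B) = B := by
  rw [dualSub_eq_orthogonal, dualSub_eq_orthogonal]
  exact LinearMap.BilinForm.orthogonal_orthogonal nondegenerate_dotProductBilin
    isRefl_dotProductBilin B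

lemma dualSub_sup (A B : Submodule K (Fin n → K)) :
    dualSub K n (A ⊔ B) = dualSub K n A ⊓ dualSub K n B := by
  refine Submodule.ext fun x => ?_
  simp only [mem_inf, mem_dualSub]
  refine ⟨fun h => ⟨fun y hy => h y (mem_sup_left hy), fun y hy => h y (mem_sup_right hy)⟩,
    fun ⟨hA, hB⟩ y hy => ?_⟩
  obtain ⟨a, ha, b, hb, rfl⟩ := mem_sup.1 hy
  rw [add_dotProduct, hA a ha, hB b hb, add_zero]

end Duality

section RankSupport

open Module

variable {F E : Type*} [Field F] [Field E] [Algebra F E] {n : ℕ}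

/-- The extension of scalars of an `F`-subspace `U` of `F^n`, realised inside `E^n` as the
`E`-span of `U`. -/
noncomputable def scalarExtension (E : Type*) [Field E] [Algebra F E]
    (U : Submodule F (Fin n → F)) : Submodule E (Fin n → E) :=
  span E (fIncl F E n '' U)

lemma scalarExtension_mono {U V : Submodule F (Fin n → F)} (h : U ≤ V) :
    scalarExtension E U ≤ scalarExtension E V :=
  span_mono (Set.image_mono h)

lemma finrank_scalarExtension (U : Submodule F (Fin n → F)) :
    finrank E (scalarExtension E U) = finrank F U := by
  let b := finBasis F U
  have hb : LinearIndependent F fun j => (b j : Fin n → F) :=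
    b.linearIndependent.map' U.subtype U.ker_subtype
  have hU : span F (Set.range fun j => (b j : Fin n → F)) = U := by
    have himage : (Set.range fun j => (b j : Fin n → F)) = U.subtype '' Set.range b :=
      Set.range_comp U.subtype b
    rw [himage, ← map_span, b.span_eq, map_subtype_top]
  have hspan : scalarExtension E U = span E (Set.range fun j => fIncl F E n (b j)) := by
    rw [scalarExtension]
    nth_rw 1 [← hU]
    rw [← map_coe, map_span, span_span_of_tower, ← Set.range_comp]
    rfl
  have hindep : LinearIndependent E fun j => fIncl F E n (b j) :=
    linearIndependent_algebraMap_comp_iff.2 hb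
  rw [hspan, finrank_span_eq_card hindep, Fintype.card_fin]

lemma mem_dualSub_scalarExtension {U : Submodule F (Fin n → F)} {a : Fin n → E} :
    a ∈ dualSub E n (scalarExtension E U) ↔ ∀ u ∈ U, fIncl F E n u ⬝ᵥ a = 0 := by
  refine ⟨fun h u hu => mem_dualSub.1 h _ (subset_span ⟨u, hu, rfl⟩),
    fun h => mem_dualSub.2 fun y hy => ?_⟩
  induction hy using span_induction with
  | mem _ hu =>
    obtain ⟨u, hu, rfl⟩ := hu
    exact h u hu
  | zero => exact zero_dotProduct _
  | add y z _ _ hy hz => rw [add_dotProduct, hy, hz, add_zero]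
  | smul c y _ hy => rw [smul_dotProduct, hy, smul_zero]

lemma dualSub_scalarExtension (U : Submodule F (Fin n → F)) :
    dualSub E n (scalarExtension E U) = scalarExtension E (dualSub F n U) := by
  symm
  refine eq_of_le_of_finrank_eq (span_le.2 ?_) ?_
  · rintro _ ⟨y, hy, rfl⟩
    refine mem_dualSub_scalarExtension.2 fun u hu => ?_
    calc fIncl F E n u ⬝ᵥ fIncl F E n y
      _ = algebraMap F E (u ⬝ᵥ y) := ((algebraMap F E).map_dotProduct u y).symm
      _ = 0 := by rw [mem_dualSub.1 hy u hu, map_zero]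
  · have hE := finrank_dualSub_add_finrank (scalarExtension E U)
    have hF := finrank_dualSub_add_finrank U
    rw [finrank_scalarExtension] at hE ⊢
    omega

lemma dual_apply_fIncl_dotProduct (φ : Dual F E) (u : Fin n → F) (a : Fin n → E) :
    φ (fIncl F E n u ⬝ᵥ a) = u ⬝ᵥ (φ ∘ a) := by
  simp [dotProduct, fIncl, ← Algebra.smul_def]

lemma mem_scalarExtension_iff {U : Submodule F (Fin n → F)} {a : Fin n → E} :
    a ∈ scalarExtension E U ↔ ∀ φ : Dual F E, φ ∘ a ∈ U := by
  rw [← dualSub_dualSub U, ← dualSub_scalarExtension, mem_dualSub_scalarExtension]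
  simp only [mem_dualSub (B := dualSub F n U), ← dual_apply_fIncl_dotProduct,
    ← forall_dual_apply_eq_zero_iff F (fIncl F E n _ ⬝ᵥ a)]
  exact ⟨fun h φ u hu => h u hu φ, fun h u hu φ => h φ u hu⟩

lemma rankSupport_le_iff {A : Set (Fin n → E)} {U : Submodule F (Fin n → F)} :
    rankSupport F E n A ≤ U ↔ A ⊆ scalarExtension E U := by
  refine ⟨fun h a ha => mem_scalarExtension_iff.2 fun φ => h (mem_sInf.2 fun V hV => ?_),
    fun h => sInf_le h⟩
  exact mem_scalarExtension_iff.1 (hV ha) φ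

lemma subset_scalarExtension_rankSupport (A : Set (Fin n → E)) :
    A ⊆ scalarExtension E (rankSupport F E n A) :=
  rankSupport_le_iff.1 le_rfl

lemma rankSupport_mono {A B : Set (Fin n → E)} (h : A ⊆ B) :
    rankSupport F E n A ≤ rankSupport F E n B :=
  rankSupport_le_iff.2 (h.trans (subset_scalarExtension_rankSupport B))

lemma exists_hyperplane_rankSupport_lt {W : Submodule E (Fin n → E)} (hW : 0 < finrank E W) :
    ∃ B ≤ W, finrank E B + 1 = finrank E W ∧
      rankSupport F E n (B : Set (Fin n → E)) < rankSupport F E n (W : Set (Fin n → E)) := by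
  set S := rankSupport F E n (W : Set (Fin n → E))
  have hWS : W ≤ scalarExtension E S := subset_scalarExtension_rankSupport _
  have hS : finrank E W ≤ finrank F S :=
    (finrank_mono hWS).trans_eq (finrank_scalarExtension S)
  obtain ⟨H, hHS, hH⟩ := exists_le_finrank_eq (Y := S) (s := finrank F S - 1) (by omega)
  have hWH : finrank E W - 1 ≤ finrank E ↥(W ⊓ scalarExtension E H) := by
    have hsum := finrank_sup_add_finrank_inf_eq W (scalarExtension E H)
    have hsup := finrank_mono (sup_le hWS (scalarExtension_mono (E := E) hHS))
    rw [finrank_scalarExtension] at hsum hsup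
    omega
  obtain ⟨B, hB, hBdim⟩ := exists_le_finrank_eq hWH
  have hBH : rankSupport F E n (B : Set (Fin n → E)) ≤ H :=
    rankSupport_le_iff.2 (hB.trans inf_le_right)
  refine ⟨B, hB.trans inf_le_left, by omega, hBH.trans_lt (lt_of_le_of_ne hHS ?_)⟩
  rintro rfl
  omega

variable [FiniteDimensional F E]

lemma rankSupport_eq_map_compLeft {φ₀ : Dual F E} (hφ₀ : φ₀ ≠ 0) (D : Submodule E (Fin n → E)) :
    rankSupport F E n (D : Set (Fin n → E)) =
      (D.restrictScalars F).map (φ₀.compLeft (Fin n)) := by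
  refine le_antisymm (rankSupport_le_iff.2 fun a ha => mem_scalarExtension_iff.2 fun φ => ?_)
    (map_le_iff_le_comap.2 fun a ha => ?_)
  · obtain ⟨e, he⟩ := exists_dual_apply_eq_apply_mul hφ₀ φ
    exact ⟨e • a, D.smul_mem e ha, funext fun i => (he (a i)).symm⟩
  · exact mem_scalarExtension_iff.1 (subset_scalarExtension_rankSupport _ ha) φ₀

lemma wt_le_mul_finrank (D : Submodule E (Fin n → E)) :
    wt F E n (D : Set (Fin n → E)) ≤ finrank F E * finrank E D := by
  obtain ⟨φ₀, hφ₀⟩ := exists_ne (0 : Dual F E)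
  have : FiniteDimensional F D := .trans F E D
  rw [wt, rankSupport_eq_map_compLeft hφ₀, finrank_mul_finrank]
  exact finrank_map_le _ (D.restrictScalars F)

-- In terms of a single functional `φ₀`, the support of `D` is `φ₀(D)`, so it suffices that `W` be
-- the sum of `D` and of vectors killed by `φ₀`.
lemma exists_hyperplane_rankSupport_eq {W : Submodule E (Fin n → E)}
    (hW : wt F E n (W : Set (Fin n → E)) + finrank F E ≤ finrank F E * finrank E W) :
    ∃ D ≤ W, finrank E D + 1 = finrank E W ∧
      rankSupport F E n (D : Set (Fin n → E)) = rankSupport F E n (W : Set (Fin n → E)) := by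
  obtain ⟨φ₀, hφ₀⟩ := exists_ne (0 : Dual F E)
  have : FiniteDimensional F W := .trans F E W
  let f : W →ₗ[F] Fin n → F := φ₀.compLeft (Fin n) ∘ₗ W.subtype.restrictScalars F
  have hrange : LinearMap.range f = rankSupport F E n (W : Set (Fin n → E)) := by
    rw [rankSupport_eq_map_compLeft hφ₀, LinearMap.range_comp]
    congr 1
    exact range_subtype (W.restrictScalars F)
  have hker : finrank F E ≤ finrank F (LinearMap.ker f) := by
    have hrank := f.finrank_range_add_finrank_ker
    rw [hrange, ← finrank_mul_finrank F E W] at hrank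
    rw [wt] at hW
    omega
  obtain ⟨ℓ, hℓ⟩ := exists_dual_map_eq_top hker
  have hlift (c : E) : ∃ x ∈ LinearMap.ker f, ℓ x = c := hℓ.ge (mem_top (x := c))
  have hℓ0 : ℓ ≠ 0 := by
    rintro rfl
    obtain ⟨x, -, hx⟩ := hlift 1
    exact zero_ne_one hx
  have hDW : (LinearMap.ker ℓ).map W.subtype ≤ W := map_subtype_le _ _
  refine ⟨_, hDW, ?_, (rankSupport_mono hDW).antisymm ?_⟩
  · rw [finrank_map_subtype_eq, Dual.finrank_ker_add_one_of_ne_zero hℓ0]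
  · rw [rankSupport_eq_map_compLeft hφ₀, rankSupport_eq_map_compLeft hφ₀]
    rintro _ ⟨w, hw, rfl⟩
    obtain ⟨x, hx, hxw⟩ := hlift (ℓ ⟨w, hw⟩)
    have hx0 : φ₀.compLeft (Fin n) (x : Fin n → E) = 0 := hx
    refine ⟨w - x, ⟨⟨w, hw⟩ - x, ?_, rfl⟩, by rw [map_sub, hx0, sub_zero]⟩
    exact LinearMap.mem_ker.2 (by rw [map_sub, hxw, sub_self])

end RankSupport

section RankMinimality

open Module

variable {F E : Type*} [Field F] [Field E] [Algebra F E] {n : ℕ} {C : Submodule E (Fin n → E)}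
  {r : ℕ}

lemma lt_grw_iff (hr : r ≤ finrank E C) {s : ℕ} :
    s < grw F E n C r ↔
      ∀ D ≤ C, finrank E D = r → s < wt F E n (D : Set (Fin n → E)) := by
  refine ⟨fun h D hDC hD => h.trans_le (Nat.sInf_le ⟨D, hDC, hD, rfl⟩), fun h => ?_⟩
  obtain ⟨D₀, hD₀C, hD₀⟩ := exists_le_finrank_eq hr
  obtain ⟨D, hDC, hD, hwt⟩ := Nat.sInf_mem (s := {w | ∃ D ≤ C, finrank E D = r ∧
    wt F E n (D : Set (Fin n → E)) = w}) ⟨_, D₀, hD₀C, hD₀, rfl⟩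
  exact (h D hDC hD).trans_eq hwt

variable [FiniteDimensional F E]

lemma IsRMinimal.lt_wt (hmin : IsRMinimal F E n C r) {W : Submodule E (Fin n → E)} (hWC : W ≤ C)
    (hW : finrank E W = r + 1) : finrank F E * r < wt F E n (W : Set (Fin n → E)) := by
  by_contra! hwt
  obtain ⟨D, hDW, hD, hDsupp⟩ := exists_hyperplane_rankSupport_eq (F := F) (W := W) <| by
    rw [hW, mul_add_one]
    exact Nat.add_le_add_right hwt _
  obtain ⟨B, hBW, hB, hBsupp⟩ := exists_hyperplane_rankSupport_lt (F := F) (W := W) (by omega)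
  rw [← hDsupp] at hBsupp
  exact hBsupp.ne (hmin D (hDW.trans hWC) (by omega) B (hBW.trans hWC) (by omega) hBsupp.le)

lemma isRMinimal_of_lt_wt
    (h : ∀ W ≤ C, finrank E W = r + 1 → finrank F E * r < wt F E n (W : Set (Fin n → E))) :
    IsRMinimal F E n C r := by
  intro D hDC hD B hBC hBD hsupp
  suffices hle : B ≤ D by rw [eq_of_le_of_finrank_eq hle hBD]
  by_contra hle
  obtain ⟨b, hbB, hbD⟩ := Set.not_subset.1 hle
  have hsup : D ⊔ span E {b} ≤ scalarExtension E (rankSupport F E n (D : Set (Fin n → E))) :=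
    sup_le (subset_scalarExtension_rankSupport _)
      ((span_singleton_le_iff_mem _ _).2 (rankSupport_le_iff.1 hsupp hbB))
  have hlt : finrank F E * r < wt F E n ((D ⊔ span E {b} : Submodule E _) : Set (Fin n → E)) :=
    h _ (sup_le hDC ((span_singleton_le_iff_mem _ _).2 (hBC hbB)))
      (by rw [finrank_sup_span_singleton hbD, hD])
  have hwt : wt F E n ((D ⊔ span E {b} : Submodule E _) : Set (Fin n → E)) ≤ finrank F E * r :=
    (finrank_mono (rankSupport_le_iff.2 hsup)).trans (hD ▸ wt_le_mul_finrank D)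
  exact hlt.not_ge hwt

theorem isRMinimal_iff_lt_grw (hr : r < finrank E C) :
    IsRMinimal F E n C r ↔ finrank F E * r < grw F E n C (r + 1) := by
  rw [lt_grw_iff hr]
  exact ⟨fun h W hWC hW => h.lt_wt hWC hW, isRMinimal_of_lt_wt⟩

end RankMinimality

section WeightDuality

open Module

variable {F E : Type*} [Field F] [Field E] [Algebra F E] {n : ℕ} {C : Submodule E (Fin n → E)}

lemma finrank_dualSub_inf_scalarExtension (C : Submodule E (Fin n → E))
    (U : Submodule F (Fin n → F)) :
    finrank E ↥(dualSub E n C ⊓ scalarExtension E (dualSub F n U)) + finrank E C + finrank F U =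
      n + finrank E ↥(C ⊓ scalarExtension E U) := by
  have hdual := finrank_dualSub_add_finrank (C ⊔ scalarExtension E U)
  have hsum := finrank_sup_add_finrank_inf_eq C (scalarExtension E U)
  rw [dualSub_sup, dualSub_scalarExtension] at hdual
  rw [finrank_scalarExtension] at hsum
  omega

lemma exists_wt_le_iff {s a : ℕ} (hs : s ≤ n) :
    (∃ D ≤ C, finrank E D = a ∧ wt F E n (D : Set (Fin n → E)) ≤ s) ↔
      ∃ U : Submodule F (Fin n → F), finrank F U = s ∧
        a ≤ finrank E ↥(C ⊓ scalarExtension E U) := by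
  constructor
  · rintro ⟨D, hDC, rfl, hwt⟩
    obtain ⟨U, hDU, hU⟩ := exists_ge_finrank_eq hwt (hs.trans_eq (finrank_fin_fun F).symm)
    exact ⟨U, hU, finrank_mono (le_inf hDC (rankSupport_le_iff.1 hDU))⟩
  · rintro ⟨U, rfl, ha⟩
    obtain ⟨D, hD, hDa⟩ := exists_le_finrank_eq ha
    exact ⟨D, hD.trans inf_le_left, hDa,
      finrank_mono (rankSupport_le_iff.2 (hD.trans inf_le_right))⟩

lemma exists_dualSub_wt_le {s t a b : ℕ} (hst : s + t = n) (hab : b + finrank E C = t + a)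
    (h : ∃ D ≤ C, finrank E D = a ∧ wt F E n (D : Set (Fin n → E)) ≤ s) :
    ∃ D ≤ dualSub E n C, finrank E D = b ∧ wt F E n (D : Set (Fin n → E)) ≤ t := by
  obtain ⟨U, hU, ha⟩ := (exists_wt_le_iff (by omega)).1 h
  have hUdual := finrank_dualSub_add_finrank U
  have hdim := finrank_dualSub_inf_scalarExtension C U
  exact (exists_wt_le_iff (by omega)).2 ⟨dualSub F n U, by omega, by omega⟩

theorem lt_grw_iff_lt_grw_dualSub {s t a b : ℕ} (hst : s + t = n)
    (hab : b + finrank E C = t + a) (ha : a ≤ finrank E C) (has : a ≤ s) :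
    s < grw F E n C a ↔ t < grw F E n (dualSub E n C) b := by
  have hdual := finrank_dualSub_add_finrank C
  rw [lt_grw_iff ha, lt_grw_iff (by omega), ← not_iff_not]
  push Not
  refine ⟨exists_dualSub_wt_le hst hab, fun h => ?_⟩
  rw [← dualSub_dualSub C]
  exact exists_dualSub_wt_le (by omega) (by omega) h

end WeightDuality

/-- Theorem 4.5: suppose `m ≥ 2`; let `C` be an `[n,k]` code and `r ∈ {1, …, k-1}` with
`n ≥ (m-1)r + k`. Then `C` is `r`-minimal iff
`d_{n-(m-1)r-k+1}(C^⊥) ≥ n - mr + 1`. -/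
theorem statement14 (F E : Type*) [Field F] [Field E] [Algebra F E]
    [FiniteDimensional F E] (m : ℕ) (hm : Module.finrank F E = m) (hm2 : 2 ≤ m)
    (n k : ℕ) (hk : 1 ≤ k) (hkn : k ≤ n)
    (C : Submodule E (Fin n → E)) (hC : Module.finrank E C = k)
    (r : ℕ) (hr1 : 1 ≤ r) (hrk : r + 1 ≤ k) (hn : (m - 1) * r + k ≤ n) :
    IsRMinimal F E n C r ↔
      n - m * r + 1 ≤ grw F E n (dualSub E n C) (n - (m - 1) * r - k + 1) := by
  have hmr : m * r = (m - 1) * r + r := by rw [← add_one_mul, Nat.sub_add_cancel (by omega)]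
  have hpos : 1 ≤ (m - 1) * r := Nat.mul_pos (by omega) hr1
  calc IsRMinimal F E n C r
    _ ↔ m * r < grw F E n C (r + 1) := by rw [isRMinimal_iff_lt_grw (by omega), hm]
    _ ↔ n - m * r < grw F E n (dualSub E n C) (n - (m - 1) * r - k + 1) :=
      lt_grw_iff_lt_grw_dualSub (by omega) (by omega) (by omega) (by omega)
end

section
/- (1) If m = 3, then for every integer k ≥ 2, every F-subspace A of E^k that is a cutting 1-blocking set of E^k satisfies dim_F(A) ≥ 2k (equivalently, ϖ_{E/F}(k,1) ≥ 2k). (2) If m = 4, then for every integer k ≥ 3, every F-subspace A of E^k that is a cutting 2-blocking set of E^k satisfies dim_F(A) ≥ 2k+3 (equivalently, ϖ_{E/F}(k,2) ≥ 2k+3). -/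
open Submodule Pointwise

/-- `S` is a cutting `r`-blocking set of `L`: for every submodule `V` of codimension `r`,
the span of `S ∩ V` is all of `V`. -/
def IsCuttingBlocking (R : Type*) {L : Type*} [DivisionRing R] [AddCommGroup L] [Module R L]
    (S : Set L) (r : ℕ) : Prop :=
  ∀ V : Submodule R L, Module.finrank R V = Module.finrank R L - r →
    Submodule.span R (S ∩ (V : Set L)) = V

/-!
Write `m = [E : F]`. For an `F`-subspace `A` of an `E`-space `V`, call `dim_F (A ∩ Eb)` the weight
of the point `Eb`.

An `F`-subspace of dimension at most `m * r` is disjoint from some `E`-subspace of codimension `r`,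
so a cutting `r`-blocking subspace has dimension at least `m * r + 1`. The first claim reduces to
finding an `E`-linear functional injective on a given `F`-subspace `B` of dimension at most `m`. If
`F` is finite, the functionals vanishing at a given nonzero vector of `B` have index `|E|` in the
dual, and `B` has fewer than `|E|` nonzero vectors. If `F` is infinite, a functional of maximal rank
on `B` will do, since a generic perturbation could otherwise increase the rank.

Projecting from a point of weight `w` preserves cutting blocking sets and lowers `dim_F A` by `w`,
so each extra dimension of `V` costs at least one dimension of `A`. This crude bound already gives
`dim_F V < 2 * dim_F A`; then `A` meets `l • A` for any `l ∈ E \ F`, which produces a point of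
weight two, and projecting from that point shows that each extra dimension costs two.
-/

open Module (finrank Dual)

section LinearAlgebra

variable {K V V' : Type*} [Field K] [AddCommGroup V] [Module K V] [AddCommGroup V'] [Module K V']

lemma exists_le_finrank_eq_s17 {A : Submodule K V} {n : ℕ} (hn : n ≤ finrank K A) :
    ∃ B ≤ A, finrank K B = n := by
  obtain ⟨f, hf⟩ := exists_linearIndependent_of_le_finrank hn
  refine ⟨(span K (Set.range f)).map A.subtype, map_subtype_le _ _, ?_⟩
  rw [finrank_map_subtype_eq, finrank_span_eq_card hf, Fintype.card_fin]

lemma finrank_map_add_finrank_ker_inf (f : V →ₗ[K] V') (A : Submodule K V) [FiniteDimensional K A] :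
    finrank K (A.map f) + finrank K ↥(LinearMap.ker f ⊓ A) = finrank K A := by
  rw [← (f.domRestrict A).finrank_range_add_finrank_ker, LinearMap.range_domRestrict,
    LinearMap.ker_domRestrict, ← finrank_map_subtype_eq, map_comap_subtype, inf_comm]

lemma finrank_comap_add_finrank_of_surjective [FiniteDimensional K V] {f : V →ₗ[K] V'}
    (hf : Function.Surjective f) (W : Submodule K V') :
    finrank K (W.comap f) + finrank K V' = finrank K V + finrank K W := by
  have : FiniteDimensional K V' := Module.Finite.of_surjective f hf
  have hker := finrank_map_add_finrank_ker_inf f (W.comap f)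
  rw [map_comap_eq_of_surjective hf, inf_eq_left.2 (LinearMap.ker_le_comap f)] at hker
  have hrange := f.finrank_range_add_finrank_ker
  rw [LinearMap.range_eq_top.2 hf, finrank_top] at hrange
  omega

lemma finrank_le_finrank_inf_ker_dual_add_one [FiniteDimensional K V] (W : Submodule K V)
    (φ : Dual K V) : finrank K W ≤ finrank K ↥(W ⊓ LinearMap.ker φ) + 1 := by
  have hmap := finrank_map_add_finrank_ker_inf φ W
  have hle : finrank K (W.map φ) ≤ 1 := (finrank_le _).trans_eq (Module.finrank_self K)
  rw [inf_comm]
  omega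

lemma exists_injective_add_smul [Infinite K] [FiniteDimensional K V] {f : V →ₗ[K] V'}
    (hf : Function.Injective f) (g : V →ₗ[K] V') :
    ∃ c : K, c ≠ 0 ∧ Function.Injective (f + c • g) := by
  obtain ⟨h, hhf⟩ := f.exists_leftInverse_of_injective (LinearMap.ker_eq_bot.2 hf)
  obtain ⟨a, ha⟩ :=
    ((Set.finite_singleton 0).union (Module.End.finite_spectrum (h ∘ₗ g))).exists_notMem
  simp only [Set.mem_union, Set.mem_singleton_iff, not_or, spectrum.notMem_iff] at ha
  obtain ⟨ha0, hunit⟩ := ha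
  refine ⟨-a⁻¹, neg_ne_zero.2 (inv_ne_zero ha0), ?_⟩
  have hcomp : (a • h) ∘ₗ (f + -a⁻¹ • g) = algebraMap K (Module.End K V) a - h ∘ₗ g := by
    rw [LinearMap.smul_comp, LinearMap.comp_add, LinearMap.comp_smul, hhf, smul_add, smul_smul,
      mul_neg, mul_inv_cancel₀ ha0, neg_one_smul, ← sub_eq_add_neg, Algebra.algebraMap_eq_smul_one]
    rfl
  refine Function.Injective.of_comp (f := a • h) ?_
  rw [← LinearMap.coe_comp, hcomp]
  exact ((Module.End.isUnit_iff _).1 hunit).injective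

lemma exists_finrank_range_lt_finrank_range_add_smul [Infinite K] [FiniteDimensional K V]
    {f g : V →ₗ[K] V'} {b : V} (hfb : f b = 0) (hgb : g b ∉ LinearMap.range f) :
    ∃ c : K, finrank K (LinearMap.range f) < finrank K (LinearMap.range (f + c • g)) := by
  obtain ⟨s, hs⟩ := f.rangeRestrict.exists_rightInverse_of_surjective f.range_rangeRestrict
  have hfs (y : LinearMap.range f) : f (s y) = y := congrArg Subtype.val (LinearMap.congr_fun hs y)
  -- For `c ≠ 0`, `y + x • g b + c • g (s y) = (f + c • g) (s y + (x / c) • b)`, so it suffices to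
  -- perturb the injective map `T`.
  let T : (LinearMap.range f × K) →ₗ[K] V' :=
    (LinearMap.range f).subtype.coprod (LinearMap.toSpanSingleton K V' (g b))
  have hT : Function.Injective T := by
    have hgb0 : g b ≠ 0 := fun h ↦ hgb (h ▸ zero_mem _)
    rw [← LinearMap.ker_eq_bot, LinearMap.ker_coprod_of_disjoint_range, ker_subtype,
      LinearMap.ker_toSpanSingleton K hgb0, prod_bot]
    rw [range_subtype, LinearMap.range_toSpanSingleton]
    exact (disjoint_span_singleton' hgb0).2 hgb
  obtain ⟨c, hc, hinj⟩ := exists_injective_add_smul hT (g ∘ₗ s ∘ₗ LinearMap.fst K _ K)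
  refine ⟨c, ?_⟩
  have hle : LinearMap.range (T + c • (g ∘ₗ s ∘ₗ LinearMap.fst K _ K)) ≤
      LinearMap.range (f + c • g) := by
    rintro _ ⟨⟨y, x⟩, rfl⟩
    refine ⟨s y + (x / c) • b, ?_⟩
    simp only [T, LinearMap.add_apply, LinearMap.smul_apply, LinearMap.comp_apply,
      LinearMap.coprod_apply, LinearMap.toSpanSingleton_apply, LinearMap.fst_apply, subtype_apply,
      map_add, map_smul, smul_add, smul_smul, smul_zero, div_mul_cancel₀ x hc, hfs, hfb]
    abel
  calc finrank K (LinearMap.range f)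
    _ < finrank K (LinearMap.range f × K) := by simp
    _ = finrank K (LinearMap.range (T + c • (g ∘ₗ s ∘ₗ LinearMap.fst K _ K))) :=
      (LinearMap.finrank_range_of_inj hinj).symm
    _ ≤ finrank K (LinearMap.range (f + c • g)) := finrank_mono hle

end LinearAlgebra

section Functionals

lemma exists_dual_forall_ne_zero {E V : Type*} [Field E] [AddCommGroup V] [Module E V]
    (s : Finset V) (hs : (s.card : ℕ∞) < ENat.card E) (hs0 : 0 ∉ s) :
    ∃ φ : Dual E V, ∀ v ∈ s, φ v ≠ 0 := by
  by_contra! hcover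
  let H (v : V) : AddSubgroup (Dual E V) := (Dual.eval E V v).toAddMonoidHom.ker
  have hunion : ⋃ v ∈ s, (0 : Dual E V) +ᵥ (H v : Set (Dual E V)) = Set.univ :=
    Set.eq_univ_of_forall fun φ ↦ by simpa [H] using hcover φ
  obtain ⟨v, hv, hfin, hindex⟩ := AddSubgroup.exists_index_le_card_of_leftCoset_cover hunion
  have hv0 : v ≠ 0 := ne_of_mem_of_not_mem hv hs0
  have hsurj : Function.Surjective (Dual.eval E V v) := by
    obtain ⟨φ, hφ⟩ := Module.Projective.exists_dual_eq_one E hv0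
    exact fun e ↦ ⟨e • φ, by simp [hφ]⟩
  have hcard : (H v).index = Nat.card E := by
    rw [AddSubgroup.index_ker, AddMonoidHom.range_eq_top.2 hsurj, AddSubgroup.card_top]
  have : Finite E := Nat.finite_of_card_ne_zero (hcard ▸ hfin.index_ne_zero)
  rw [ENat.card_eq_coe_natCard, Nat.cast_lt, ← hcard] at hs
  exact hs.not_ge hindex

variable {F E V : Type*} [Field F] [Field E] [Algebra F E] [AddCommGroup V] [Module E V]
  [Module F V] [IsScalarTower F E V]

lemma exists_dual_disjoint_ker_of_infinite [Infinite F] (B : Submodule F V)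
    [FiniteDimensional F B] (hB : finrank F B ≤ finrank F E) :
    ∃ φ : Dual E V, Disjoint ((LinearMap.ker φ).restrictScalars F) B := by
  let res (φ : Dual E V) : B →ₗ[F] E := (φ.restrictScalars F).domRestrict B
  let rk (φ : Dual E V) : ℕ := finrank F (LinearMap.range (res φ))
  have hbdd : BddAbove (Set.range rk) :=
    ⟨finrank F B, Set.forall_mem_range.2 fun φ ↦ LinearMap.finrank_range_le (res φ)⟩
  obtain ⟨φ, hφ⟩ := Nat.sSup_mem (Set.range_nonempty rk) hbdd
  have hmax (ψ : Dual E V) : rk ψ ≤ rk φ := hφ ▸ le_csSup hbdd (Set.mem_range_self ψ)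
  refine ⟨φ, disjoint_def.2 fun b hφb hb ↦ ?_⟩
  by_contra hb0
  have hrk : rk φ < finrank F E := by
    have hker : 0 < finrank F (LinearMap.ker (res φ)) :=
      Module.finrank_pos_iff_exists_ne_zero.2 ⟨⟨⟨b, hb⟩, hφb⟩, by simpa [Subtype.ext_iff] using hb0⟩
    have : rk φ + _ = _ := (res φ).finrank_range_add_finrank_ker
    omega
  obtain ⟨e, -, he⟩ := SetLike.exists_of_lt (lt_top_of_finrank_lt_finrank hrk)
  obtain ⟨ψ, hψ⟩ := Module.Projective.exists_dual_eq_one E hb0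
  obtain ⟨c, hc⟩ := exists_finrank_range_lt_finrank_range_add_smul (f := res φ)
    (g := res (e • ψ)) (b := ⟨b, hb⟩) hφb (by simpa [res, hψ] using he)
  have hres : res (φ + algebraMap F E c • e • ψ) = res φ + c • res (e • ψ) := by
    ext; simp [res, Algebra.smul_def]
  rw [← hres] at hc
  exact (hmax (φ + algebraMap F E c • e • ψ)).not_gt hc

lemma exists_dual_disjoint_ker_of_finite [Finite F] [FiniteDimensional F E] (B : Submodule F V)
    [FiniteDimensional F B] (hB : finrank F B ≤ finrank F E) :
    ∃ φ : Dual E V, Disjoint ((LinearMap.ker φ).restrictScalars F) B := by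
  classical
  have : Finite E := Module.finite_of_finite F
  have : Finite B := Module.finite_of_finite F
  have hBfin : (B : Set V).Finite := Set.toFinite _
  have hcard : hBfin.toFinset.card ≤ Nat.card E := by
    rw [← Nat.card_eq_card_finite_toFinset hBfin, Module.natCard_eq_pow_finrank (K := F) (V := E)]
    exact (Module.natCard_eq_pow_finrank (K := F) (V := B)).trans_le
      (Nat.pow_le_pow_right Nat.card_pos hB)
  have hlt : (hBfin.toFinset.erase 0).card < hBfin.toFinset.card :=
    Finset.card_erase_lt_of_mem (by simp)
  obtain ⟨φ, hφ⟩ := exists_dual_forall_ne_zero (E := E) (hBfin.toFinset.erase 0)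
    (by rw [ENat.card_eq_coe_natCard]; exact_mod_cast hlt.trans_le hcard)
    (Finset.notMem_erase _ _)
  refine ⟨φ, disjoint_def.2 fun b hφb hb ↦ ?_⟩
  by_contra hb0
  exact hφ b (by simp [hb0, hb]) hφb

lemma exists_dual_disjoint_ker [FiniteDimensional F E] (B : Submodule F V)
    [FiniteDimensional F B] (hB : finrank F B ≤ finrank F E) :
    ∃ φ : Dual E V, Disjoint ((LinearMap.ker φ).restrictScalars F) B := by
  rcases finite_or_infinite F with hF | hF
  · exact exists_dual_disjoint_ker_of_finite B hB
  · exact exists_dual_disjoint_ker_of_infinite B hB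

variable [FiniteDimensional F E] [FiniteDimensional E V]

lemma exists_disjoint_restrictScalars (B : Submodule F V) (n : ℕ)
    (hB : finrank F B ≤ finrank F E * n) :
    ∃ W : Submodule E V, finrank E V ≤ finrank E W + n ∧ Disjoint (W.restrictScalars F) B := by
  have : FiniteDimensional F V := FiniteDimensional.trans F E V
  induction n generalizing B with
  | zero =>
    have hB0 : B = ⊥ := finrank_eq_zero.1 (by omega)
    exact ⟨⊤, by simp, hB0 ▸ disjoint_bot_right⟩
  | succ n ih =>
    obtain ⟨B₁, hB₁, hfinrank⟩ := exists_le_finrank_eq_s17 (min_le_right (finrank F E) (finrank F B))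
    obtain ⟨φ, hφ⟩ := exists_dual_disjoint_ker (E := E) B₁ (by omega)
    let K : Submodule F V := (LinearMap.ker φ).restrictScalars F
    have hK : finrank F ↥(K ⊓ B) + finrank F B₁ ≤ finrank F B := by
      have hinf : (K ⊓ B) ⊓ B₁ = ⊥ := (hφ.mono_left inf_le_left).eq_bot
      have hsup := finrank_sup_add_finrank_inf_eq (K ⊓ B) B₁
      rw [hinf, finrank_bot, add_zero] at hsup
      exact hsup ▸ finrank_mono (sup_le inf_le_right hB₁)
    rw [mul_add_one] at hB
    obtain ⟨W, hW, hWB⟩ := ih (K ⊓ B) (by omega)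
    refine ⟨W ⊓ LinearMap.ker φ, ?_, disjoint_assoc.2 hWB⟩
    have := finrank_le_finrank_inf_ker_dual_add_one W φ
    omega

end Functionals

section PointWeights

variable {F E V : Type*} [Field F] [Field E] [Algebra F E] [AddCommGroup V] [Module E V]
  [Module F V] [IsScalarTower F E V] [FiniteDimensional F V]

lemma exists_two_le_finrank_span_singleton_inf (hm : 1 < finrank F E) {A : Submodule F V}
    (hA : finrank F V < 2 * finrank F A) :
    ∃ b : V, b ≠ 0 ∧ 2 ≤ finrank F ↥((span E {b}).restrictScalars F ⊓ A) := by
  obtain ⟨l, hl⟩ := exists_linearIndependent_pair_of_one_lt_finrank hm (one_ne_zero (α := E))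
  have hl0 : l ≠ 0 := hl.ne_zero 1
  let μ : V →ₗ[F] V := (LinearMap.lsmul E V l).restrictScalars F
  have hμ : finrank F (A.map μ) = finrank F A :=
    (equivMapOfInjective μ (smul_right_injective V hl0) A).finrank_eq.symm
  have hinter : ¬ Disjoint (A.map μ) A := fun hdisj ↦ by
    have := finrank_add_finrank_le_of_disjoint hdisj
    omega
  rw [disjoint_def] at hinter
  push Not at hinter
  obtain ⟨_, ⟨b, hb, rfl⟩, hlb, hlb0⟩ := hinter
  have hb0 : b ≠ 0 := by
    rintro rfl
    exact hlb0 (map_zero μ)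
  refine ⟨b, hb0, ?_⟩
  have hindep : LinearIndependent F (fun i ↦ (![1, l] : Fin 2 → E) i • b) :=
    hl.map' ((LinearMap.toSpanSingleton E V b).restrictScalars F)
      (LinearMap.ker_eq_bot.2 (smul_left_injective E hb0))
  have hspan : span F (Set.range fun i ↦ (![1, l] : Fin 2 → E) i • b) ≤
      (span E {b}).restrictScalars F ⊓ A := by
    rw [span_le, Set.range_subset_iff, Fin.forall_fin_two]
    exact ⟨⟨smul_mem _ _ (mem_span_singleton_self b), by simpa using hb⟩,
      ⟨smul_mem _ _ (mem_span_singleton_self b), hlb⟩⟩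
  simpa [finrank_span_eq_card hindep] using finrank_mono hspan

end PointWeights

namespace IsCuttingBlocking

lemma image {E V V' : Type*} [Field E] [AddCommGroup V] [Module E V] [FiniteDimensional E V]
    [AddCommGroup V'] [Module E V'] {r : ℕ} {S : Set V} (hS : IsCuttingBlocking E S r)
    {f : V →ₗ[E] V'} (hf : Function.Surjective f) (hr : r ≤ finrank E V') :
    IsCuttingBlocking E (f '' S) r := by
  intro W hW
  have hcomap : finrank E (W.comap f) = finrank E V - r := by
    have := finrank_comap_add_finrank_of_surjective hf W
    omega
  calc span E (f '' S ∩ W)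
    _ = (span E (S ∩ W.comap f)).map f := by
      rw [map_span, comap_coe, Set.image_inter_preimage]
    _ = W := by rw [hS _ hcomap, map_comap_eq_of_surjective hf]

variable {F E V : Type*} [Field F] [Field E] [Algebra F E]
  [AddCommGroup V] [Module E V] [Module F V] [IsScalarTower F E V] [FiniteDimensional E V]
  {A : Submodule F V} {r : ℕ}

lemma mul_lt_finrank [FiniteDimensional F E] (hA : IsCuttingBlocking E (A : Set V) r)
    (hr : r < finrank E V) : finrank F E * r < finrank F A := by
  by_contra! hle
  obtain ⟨W, hW, hdisj⟩ := exists_disjoint_restrictScalars (E := E) A r hle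
  obtain ⟨W', hW', hfinrank⟩ := exists_le_finrank_eq_s17 (A := W) (n := finrank E V - r) (by omega)
  have hinter : (A : Set V) ∩ W' ⊆ {0} := fun v ⟨hvA, hvW'⟩ ↦
    disjoint_def.1 hdisj v (hW' hvW') hvA
  have hbot : W' = ⊥ := by
    rw [← hA W' hfinrank, span_eq_bot]
    exact hinter
  rw [hbot, finrank_bot] at hfinrank
  omega

lemma map_mkQ (hA : IsCuttingBlocking E (A : Set V) r) {b : V} (hb : b ≠ 0)
    (hr : r < finrank E V) :
    IsCuttingBlocking E (A.map ((span E {b}).mkQ.restrictScalars F) : Set (V ⧸ span E {b})) r := by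
  have hquot := (span E {b}).finrank_quotient_add_finrank
  rw [finrank_span_singleton hb] at hquot
  exact hA.image (mkQ_surjective _) (by omega)

end IsCuttingBlocking

theorem statement17_general {F E V : Type*} [Field F] [Field E] [Algebra F E]
    [FiniteDimensional F E] [AddCommGroup V] [Module E V] [Module F V] [IsScalarTower F E V]
    [FiniteDimensional E V] {r j : ℕ} (hm : 1 < finrank F E) (hm4 : finrank F E ≤ 4)
    (hmr : 2 * finrank F E < finrank F E * r + 4) (hV : finrank E V = r + 1 + j)
    {A : Submodule F V} (hA : IsCuttingBlocking E (A : Set V) r) :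
    finrank F E * r + 1 + 2 * j ≤ finrank F A := by
  induction j generalizing V with
  | zero => exact hA.mul_lt_finrank (by omega)
  | succ j ih =>
    have : FiniteDimensional F V := FiniteDimensional.trans F E V
    have hproj (b : V) (hb : b ≠ 0) : finrank F E * r + 1 + 2 * j +
        finrank F ↥((span E {b}).restrictScalars F ⊓ A) ≤ finrank F A := by
      have hquot := (span E {b}).finrank_quotient_add_finrank
      rw [finrank_span_singleton hb] at hquot
      have hle := ih (by omega) (hA.map_mkQ hb (by omega))
      have hdim := finrank_map_add_finrank_ker_inf ((span E {b}).mkQ.restrictScalars F) A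
      rw [LinearMap.ker_restrictScalars, ker_mkQ] at hdim
      omega
    have hcrude : finrank F E * r + 2 + 2 * j ≤ finrank F A := by
      have hA0 : A ≠ ⊥ := by
        rintro rfl
        simpa using hA.mul_lt_finrank (by omega)
      obtain ⟨b, hb, hb0⟩ := A.exists_mem_ne_zero_of_ne_bot hA0
      have hpos : 0 < finrank F ↥((span E {b}).restrictScalars F ⊓ A) :=
        Module.finrank_pos_iff_exists_ne_zero.2
          ⟨⟨b, mem_span_singleton_self b, hb⟩, by simpa [Subtype.ext_iff] using hb0⟩
      have := hproj b hb0
      omega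
    have hhalf : finrank F V < 2 * finrank F A := by
      rw [← Module.finrank_mul_finrank F E V, hV]
      linarith [Nat.mul_le_mul_right j hm4]
    obtain ⟨b, hb, hweight⟩ := exists_two_le_finrank_span_singleton_inf (E := E) hm hhalf
    have := hproj b hb
    omega

/-- Theorem 5.3: (1) if `m = 3`, then for every `k ≥ 2`, every `F`-subspace of `E^k` that
is a cutting `1`-blocking set has `F`-dimension at least `2k`; (2) if `m = 4`, then for
every `k ≥ 3`, every `F`-subspace of `E^k` that is a cutting `2`-blocking set has
`F`-dimension at least `2k + 3`. -/
theorem statement17 (F E : Type*) [Field F] [Field E] [Algebra F E]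
    [FiniteDimensional F E] (m : ℕ) (hm : Module.finrank F E = m) :
    (m = 3 → ∀ k : ℕ, 2 ≤ k → ∀ A : Submodule F (Fin k → E),
        IsCuttingBlocking E (A : Set (Fin k → E)) 1 → 2 * k ≤ Module.finrank F A) ∧
      (m = 4 → ∀ k : ℕ, 3 ≤ k → ∀ A : Submodule F (Fin k → E),
        IsCuttingBlocking E (A : Set (Fin k → E)) 2 → 2 * k + 3 ≤ Module.finrank F A) := by
  refine ⟨fun hm3 k hk A hA ↦ ?_, fun hm4 k hk A hA ↦ ?_⟩
  · have := statement17_general (j := k - 2) (by omega) (by omega) (by omega)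
      (by rw [Module.finrank_fin_fun]; omega) hA
    omega
  · have := statement17_general (j := k - 3) (by omega) (by omega) (by omega)
      (by rw [Module.finrank_fin_fun]; omega) hA
    omega
end

section
/- Suppose F is a finite field with |F| = q (so E is finite). Let (k,r) ∈ ℕ² with k ≥ r+1, and set n = mr + k(r+1) − r² − 2r. Then there exists a k-dimensional E-subspace C of E^n that is r-minimal; in particular, ϖ_{E/F}(k,r) ≤ mr + k(r+1) − r² − 2r. -/
open Submodule Pointwise

/-!
Let `Y` be a `k`-dimensional `E`-space and put `h = k - r - 1`, `s = (r + 1) h`, so that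
`n = m r + s + 1`. We look for an `F`-linear map `G : F^n → Y` for which the preimage of every
`h`-dimensional `E`-subspace `H` has `F`-dimension at most `s`. A subspace of codimension `r` has a
preimage of dimension at least `n - m r = s + 1`, so the part of `range G` it contains lies in no
such `H`: the range of `G` is a cutting `r`-blocking set, and the code whose generator matrix has
the columns `G eⱼ` is `r`-minimal.

If `m ≤ r + 1`, every `G` of maximal rank will do, and if `r = 0` it suffices that `range G` spans
`Y`. Otherwise `G` exists by counting. If `G` is bad, it maps some `(s + 1)`-dimensional `K ≤ F^n`
into some `H`; the maps doing so for a given pair `(H, K)` have index `q^((s + 1) m (r + 1))` in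
the group of all maps. Writing `Q = q^m`, there are at most `c(Q) Q^((r + 1) h)` choices of `H` and
`c(q) Q^(r (s + 1))` choices of `K`, where `1 / c(q) = 1 - 1/q - 1/q^2` bounds
`∏_{i ≥ 1} (1 - q^{-i})` from below. The number of pairs is then smaller than the index by a factor
`Q / (c(Q) c(q))`, which exceeds `1` because `q ≥ 2` and `Q ≥ 8`, so they cannot cover all maps.
-/

section SubspacesOfGivenDimension

variable {K V : Type*} [DivisionRing K] [AddCommGroup V] [Module K V]

lemma exists_submodule_between_finrank_eq [FiniteDimensional K V] {W T : Submodule K V}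
    (hWT : W ≤ T) {d : ℕ} (hWd : Module.finrank K W ≤ d) (hdT : d ≤ Module.finrank K T) :
    ∃ H : Submodule K V, W ≤ H ∧ H ≤ T ∧ Module.finrank K H = d := by
  induction d, hWd using Nat.le_induction with
  | base => exact ⟨W, le_rfl, hWT, rfl⟩
  | succ d _ ih =>
    obtain ⟨H, hWH, hHT, hH⟩ := ih (by lia)
    have hTH : ¬T ≤ H := fun hTH => by
      have := Submodule.finrank_mono hTH
      lia
    obtain ⟨v, hvT, hvH⟩ := SetLike.not_le_iff_exists.mp hTH
    refine ⟨H ⊔ span K {v}, hWH.trans le_sup_left, sup_le hHT ?_, ?_⟩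
    · rwa [span_singleton_le_iff_mem]
    · rw [finrank_sup_span_singleton hvH, hH]

lemma natCard_subspaces_mul_prod [Fintype K] [Finite V] (d : ℕ) :
    Nat.card {W : Submodule K V // Module.finrank K W = d} *
        ∏ i : Fin d, (Fintype.card K ^ d - Fintype.card K ^ i.val) =
      Nat.card {v : Fin d → V // LinearIndependent K v} := by
  have := Fintype.ofFinite {W : Submodule K V // Module.finrank K W = d}
  let Frame (W : {W : Submodule K V // Module.finrank K W = d}) :=
    {v : Fin d → W.1 // LinearIndependent K v}
  let toV : (Σ W, Frame W) → {v : Fin d → V // LinearIndependent K v} := fun ⟨W, v⟩ =>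
    ⟨fun i => v.1 i, v.2.map' W.1.subtype (ker_subtype _)⟩
  have span_toV (t : Σ W, Frame W) : span K (Set.range (toV t).1) = t.1.1 := by
    refine eq_of_le_of_finrank_eq (span_le.mpr ?_) ?_
    · rintro _ ⟨i, rfl⟩
      exact (t.2.1 i).2
    · rw [finrank_span_eq_card (toV t).2, t.1.2, Fintype.card_fin]
  have toV_injective : Function.Injective toV := by
    rintro ⟨⟨W, hW⟩, v⟩ ⟨⟨W', hW'⟩, v'⟩ h
    obtain rfl : W = W' := (span_toV ⟨⟨W, hW⟩, v⟩).symm.trans (h ▸ span_toV ⟨⟨W', hW'⟩, v'⟩)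
    obtain rfl : v = v' := by
      ext i
      exact congrFun (congrArg Subtype.val h) i
    rfl
  have toV_surjective : Function.Surjective toV := fun ⟨v, hv⟩ =>
    ⟨⟨⟨span K (Set.range v), by rw [finrank_span_eq_card hv, Fintype.card_fin]⟩,
      ⟨fun i => ⟨v i, subset_span ⟨i, rfl⟩⟩, linearIndependent_span hv⟩⟩, rfl⟩
  rw [← Nat.card_congr (Equiv.ofBijective toV ⟨toV_injective, toV_surjective⟩), Nat.card_sigma,
    Finset.sum_congr rfl fun W _ =>
      show Nat.card (Frame W) = _ by rw [card_linearIndependent W.2.ge, W.2],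
    Finset.sum_const, Finset.card_univ, smul_eq_mul, Nat.card_eq_fintype_card]

end SubspacesOfGivenDimension

section GaussianBinomialBound

lemma one_sub_sub_sq_add_pow_le_prod {x : ℝ} (hx₀ : 0 ≤ x) (hx₁ : x ≤ 1) (d : ℕ) :
    1 - x - x ^ 2 + x ^ (d + 1) ≤ ∏ i ∈ Finset.range d, (1 - x ^ (i + 1)) := by
  induction d with
  | zero =>
    simp only [zero_add, pow_one, Finset.range_zero, Finset.prod_empty]
    nlinarith
  | succ d ih =>
    rcases Nat.eq_zero_or_pos d with rfl | hd
    · simp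
    have hpow : x ^ (2 * d + 2) ≤ x ^ (d + 3) := pow_le_pow_of_le_one hx₀ hx₁ (by lia)
    have hfactor : 0 ≤ 1 - x ^ (d + 1) := sub_nonneg.mpr (pow_le_one₀ hx₀ hx₁)
    calc 1 - x - x ^ 2 + x ^ (d + 1 + 1)
        ≤ 1 - x - x ^ 2 + x ^ (d + 1 + 1) + (x ^ (d + 3) - x ^ (2 * d + 2)) := by linarith
      _ = (1 - x - x ^ 2 + x ^ (d + 1)) * (1 - x ^ (d + 1)) := by ring
      _ ≤ (∏ i ∈ Finset.range d, (1 - x ^ (i + 1))) * (1 - x ^ (d + 1)) := by gcongr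
      _ = ∏ i ∈ Finset.range (d + 1), (1 - x ^ (i + 1)) := (Finset.prod_range_succ _ _).symm

lemma cast_prod_pow_sub_pow {q : ℕ} (hq : 0 < q) (d : ℕ) :
    ((∏ i : Fin d, (q ^ d - q ^ i.val) : ℕ) : ℝ) =
      (q : ℝ) ^ (d * d) * ∏ i ∈ Finset.range d, (1 - (q : ℝ)⁻¹ ^ (i + 1)) := by
  have hq₀ : (q : ℝ) ≠ 0 := by positivity
  have hconst : (q : ℝ) ^ (d * d) = ∏ _i ∈ Finset.range d, (q : ℝ) ^ d := by simp [pow_mul]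
  rw [Fin.prod_univ_eq_prod_range (fun i => q ^ d - q ^ i) d, Nat.cast_prod,
    ← Finset.prod_range_reflect (fun i => 1 - (q : ℝ)⁻¹ ^ (i + 1)), hconst,
    ← Finset.prod_mul_distrib]
  refine Finset.prod_congr rfl fun i hi => ?_
  have hid : i < d := Finset.mem_range.mp hi
  have hpow : (q : ℝ) ^ d = (q : ℝ) ^ i * (q : ℝ) ^ (d - 1 - i + 1) := by
    rw [← pow_add]
    congr 1
    lia
  rw [Nat.cast_sub (Nat.pow_le_pow_right hq hid.le), Nat.cast_pow, Nat.cast_pow, mul_sub, mul_one,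
    inv_pow, hpow, mul_inv_cancel_right₀ (pow_ne_zero _ hq₀)]

lemma natCard_subspaces_mul_le {K V : Type*} [DivisionRing K] [Finite K] [AddCommGroup V]
    [Module K V] [Finite V] {d e : ℕ} (hV : Module.finrank K V = d + e) {a : ℝ} (ha : 0 < a)
    (haK : a ≤ Nat.card K) :
    (Nat.card {W : Submodule K V // Module.finrank K W = d} : ℝ) *
        (1 - a⁻¹ - a⁻¹ ^ 2) ≤ (Nat.card K : ℝ) ^ (e * d) := by
  have := Fintype.ofFinite K
  have hq : 0 < Fintype.card K := Fintype.card_pos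
  have hframes : Nat.card {v : Fin d → V // LinearIndependent K v} ≤
      Fintype.card K ^ (d * d + e * d) := by
    calc Nat.card {v : Fin d → V // LinearIndependent K v}
        ≤ Nat.card (Fin d → V) := Nat.card_le_card_of_injective _ Subtype.val_injective
      _ = Fintype.card K ^ (d * d + e * d) := by
        rw [Nat.card_fun, Module.natCard_eq_pow_finrank (K := K), hV, Nat.card_fin, ← pow_mul,
          add_mul, Nat.card_eq_fintype_card]
  rw [← natCard_subspaces_mul_prod] at hframes
  have hframes' := (Nat.cast_le (α := ℝ)).mpr hframes
  rw [Nat.cast_mul, cast_prod_pow_sub_pow hq, Nat.cast_pow] at hframes'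
  rw [Nat.card_eq_fintype_card (α := K)] at haK ⊢
  generalize Fintype.card K = q at *
  have hprod := one_sub_sub_sq_add_pow_le_prod (x := (q : ℝ)⁻¹) (by positivity)
    (inv_le_one_of_one_le₀ (by exact_mod_cast hq)) d
  have hpow : 0 ≤ (q : ℝ)⁻¹ ^ (d + 1) := by positivity
  refine le_of_mul_le_mul_left ?_ (by positivity : 0 < (q : ℝ) ^ (d * d))
  rw [← pow_add]
  refine le_trans ?_ hframes'
  rw [mul_left_comm]
  gcongr
  calc 1 - a⁻¹ - a⁻¹ ^ 2 ≤ 1 - (q : ℝ)⁻¹ - (q : ℝ)⁻¹ ^ 2 := by gcongr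
    _ ≤ ∏ i ∈ Finset.range d, (1 - (q : ℝ)⁻¹ ^ (i + 1)) := by linarith

end GaussianBinomialBound

section Evasive

/-- An `F`-linear map `G` into an `E`-vector space is `(h, s)`-evasive if the preimage of every
`h`-dimensional `E`-subspace has `F`-dimension at most `s`. For injective `G` this is the usual
notion of an `(h, s)`-evasive `F`-subspace, applied to the range of `G`; working with maps
spares us the injectivity. -/
def IsEvasive (E : Type*) {F X Y : Type*} [Field F] [Field E] [Algebra F E] [AddCommGroup X]
    [Module F X] [AddCommGroup Y] [Module F Y] [Module E Y] [IsScalarTower F E Y]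
    (G : X →ₗ[F] Y) (h s : ℕ) : Prop :=
  ∀ H : Submodule E Y, Module.finrank E H = h →
    Module.finrank F ((H.restrictScalars F).comap G) ≤ s

variable {F E X Y : Type*} [Field F] [Field E] [Algebra F E]
  [AddCommGroup X] [Module F X] [AddCommGroup Y] [Module F Y] [Module E Y] [IsScalarTower F E Y]

lemma finrank_quotient_restrictScalars (H : Submodule E Y) :
    Module.finrank F (Y ⧸ H.restrictScalars F) =
      Module.finrank F E * Module.finrank E (Y ⧸ H) := by
  rw [(Quotient.restrictScalarsEquiv F H).finrank_eq, Module.finrank_mul_finrank]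

lemma finrank_le_finrank_comap_add [FiniteDimensional F E] [FiniteDimensional F X]
    [FiniteDimensional E Y] (G : X →ₗ[F] Y) (V : Submodule E Y) :
    Module.finrank F X ≤ Module.finrank F ((V.restrictScalars F).comap G) +
      Module.finrank F E * Module.finrank E (Y ⧸ V) := by
  have := Module.Finite.trans (R := F) E Y
  rw [← LinearMap.finrank_range_add_finrank_ker ((V.restrictScalars F).mkQ ∘ₗ G),
    LinearMap.ker_comp, ker_mkQ, add_comm, ← finrank_quotient_restrictScalars]
  gcongr
  exact Submodule.finrank_le _

/-- If the span `W` of `range G ∩ V` were smaller than `V`, it would lie in a subspace `H` of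
dimension `h`, whose preimage contains that of `V` and hence is too large. -/
lemma IsEvasive.isCuttingBlocking [FiniteDimensional F E] [FiniteDimensional F X]
    [FiniteDimensional E Y] {G : X →ₗ[F] Y} {h s r : ℕ} (hG : IsEvasive E G h s)
    (hX : Module.finrank F E * r + s < Module.finrank F X)
    (hY : Module.finrank E Y = h + (r + 1)) :
    IsCuttingBlocking E (LinearMap.range G : Set Y) r := by
  intro V hV
  set W := span E ((LinearMap.range G : Set Y) ∩ V)
  have hWV : W ≤ V := span_le.mpr Set.inter_subset_right
  by_contra hne
  have hlt : Module.finrank E W < Module.finrank E V :=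
    Submodule.finrank_lt_finrank_of_lt (lt_of_le_of_ne hWV hne)
  obtain ⟨H, hWH, -, hH⟩ := exists_submodule_between_finrank_eq hWV (d := h) (by lia) (by lia)
  have hcomap : (V.restrictScalars F).comap G ≤ (H.restrictScalars F).comap G :=
    fun x hx => hWH (subset_span ⟨⟨x, rfl⟩, hx⟩)
  have hquot : Module.finrank E (Y ⧸ V) = r := by
    have := V.finrank_quotient_add_finrank
    lia
  have hlower := finrank_le_finrank_comap_add G V
  rw [hquot] at hlower
  have := (Submodule.finrank_mono hcomap).trans (hG H hH)
  lia

lemma IsEvasive.mono {G : X →ₗ[F] Y} {h s t : ℕ} (hG : IsEvasive E G h s) (hst : s ≤ t) :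
    IsEvasive E G h t :=
  fun H hH => (hG H hH).trans hst

lemma isEvasive_of_injective [FiniteDimensional F E] [FiniteDimensional E Y] {G : X →ₗ[F] Y}
    (hG : Function.Injective G) (h : ℕ) : IsEvasive E G h (Module.finrank F E * h) := by
  rintro H rfl
  have : FiniteDimensional F H := Module.Finite.trans E H
  rw [Module.finrank_mul_finrank]
  exact LinearMap.finrank_le_finrank_of_injective
    (f := G.restrict (p := (H.restrictScalars F).comap G) (q := H.restrictScalars F) fun _ => id)
    fun x y hxy => Subtype.ext (hG (congrArg Subtype.val hxy))

lemma isEvasive_of_surjective [FiniteDimensional F X] [FiniteDimensional E Y] {G : X →ₗ[F] Y}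
    (hG : Function.Surjective G) (h : ℕ) :
    IsEvasive E G h (Module.finrank F X - Module.finrank F E * (Module.finrank E Y - h)) := by
  rintro H rfl
  have hrank := LinearMap.finrank_range_add_finrank_ker ((H.restrictScalars F).mkQ ∘ₗ G)
  rw [LinearMap.range_comp_of_range_eq_top _ (LinearMap.range_eq_top.mpr hG), range_mkQ,
    finrank_top, LinearMap.ker_comp, ker_mkQ, finrank_quotient_restrictScalars,
    Submodule.finrank_quotient] at hrank
  lia

end Evasive

section Counting

lemma exists_forall_notMem_of_natCard_lt_index {A ι : Type*} [AddGroup A] [Finite ι]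
    (S : ι → AddSubgroup A) (hS : ∀ i, Nat.card ι < (S i).index) : ∃ a, ∀ i, a ∉ S i := by
  have := Fintype.ofFinite ι
  by_contra! hcover
  obtain ⟨i, -, -, hi⟩ := AddSubgroup.exists_index_le_card_of_leftCoset_cover
    (s := Finset.univ) (g := fun _ => (0 : A)) (H := S)
    (Set.eq_univ_of_forall fun a => by simpa using hcover a)
  rw [Finset.card_univ, ← Nat.card_eq_fintype_card] at hi
  exact (hS i).not_ge hi

lemma index_compatibleMaps {F X Z : Type*} [Field F] [AddCommGroup X] [Module F X]
    [FiniteDimensional F X] [AddCommGroup Z] [Module F Z] [FiniteDimensional F Z]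
    (K : Submodule F X) (H : Submodule F Z) :
    (compatibleMaps K H).toAddSubgroup.index =
      Nat.card F ^ (Module.finrank F K * Module.finrank F (Z ⧸ H)) := by
  let T : (X →ₗ[F] Z) →ₗ[F] K →ₗ[F] Z ⧸ H :=
    LinearMap.lcomp F (Z ⧸ H) K.subtype ∘ₗ LinearMap.compRight F H.mkQ
  have ker_T : (compatibleMaps K H).toAddSubgroup = T.toAddMonoidHom.ker := by
    ext G
    simp [T, compatibleMaps, LinearMap.ext_iff, SetLike.le_def]
  have T_surjective : Function.Surjective T := by
    intro f
    obtain ⟨g, hg⟩ := H.mkQ.exists_rightInverse_of_surjective H.range_mkQ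
    obtain ⟨G, hG⟩ := (g ∘ₗ f).exists_extend
    refine ⟨G, ?_⟩
    change H.mkQ ∘ₗ (G ∘ₗ K.subtype) = f
    rw [hG, ← LinearMap.comp_assoc, hg, LinearMap.id_comp]
  rw [ker_T, AddSubgroup.index_ker, AddMonoidHom.range_eq_top.mpr T_surjective,
    AddSubgroup.card_top, Module.natCard_eq_pow_finrank (K := F), Module.finrank_linearMap]

variable {F E X Y : Type*} [Field F] [Finite F] [Field E] [Algebra F E] [FiniteDimensional F E]

variable (F E) in
lemma two_pow_finrank_le_natCard : 2 ^ Module.finrank F E ≤ Nat.card E := by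
  rw [Module.natCard_eq_pow_finrank (K := F)]
  gcongr
  exact Finite.one_lt_card

variable [AddCommGroup X] [Module F X] [FiniteDimensional F X]
  [AddCommGroup Y] [Module E Y] [FiniteDimensional E Y]

-- The factor is `(1 - 1/8 - 1/64) * (1 - 1/2 - 1/4)`, from `8 ≤ |E|` and `2 ≤ |F|`; what matters
-- is that it exceeds `1/8`.
lemma natCard_subspaces_mul_natCard_subspaces_le {h c r s : ℕ} (hE : 8 ≤ Nat.card E)
    (hX : Module.finrank F X = s + Module.finrank F E * r) (hY : Module.finrank E Y = h + c) :
    (Nat.card {H : Submodule E Y // Module.finrank E H = h} : ℝ) *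
        Nat.card {K : Submodule F X // Module.finrank F K = s} * (55 / 256) ≤
      (Nat.card E : ℝ) ^ (c * h + r * s) := by
  have : Finite E := Module.finite_of_finite F
  have : Finite X := Module.finite_of_finite F
  have : Finite Y := Module.finite_of_finite E
  have hF : 2 ≤ Nat.card F := Finite.one_lt_card
  have hH := natCard_subspaces_mul_le hY (a := 8) (by norm_num) (by exact_mod_cast hE)
  have hK := natCard_subspaces_mul_le hX (a := 2) (by norm_num) (by exact_mod_cast hF)
  rw [mul_assoc (Module.finrank F E), pow_mul, ← Nat.cast_pow,
    ← Module.natCard_eq_pow_finrank (V := E)] at hK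
  set N := Nat.card {H : Submodule E Y // Module.finrank E H = h}
  set M := Nat.card {K : Submodule F X // Module.finrank F K = s}
  calc (N : ℝ) * M * (55 / 256)
      = N * (1 - 8⁻¹ - 8⁻¹ ^ 2) * (M * (1 - 2⁻¹ - 2⁻¹ ^ 2)) := by ring
    _ ≤ (Nat.card E : ℝ) ^ (c * h) * (Nat.card E : ℝ) ^ (r * s) := by gcongr
    _ = (Nat.card E : ℝ) ^ (c * h + r * s) := (pow_add _ _ _).symm

lemma natCard_subspaces_mul_natCard_subspaces_lt {h r : ℕ} (hE : 3 ≤ Module.finrank F E)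
    (hX : Module.finrank F X = Module.finrank F E * r + ((r + 1) * h + 1))
    (hY : Module.finrank E Y = h + (r + 1)) :
    Nat.card {H : Submodule E Y // Module.finrank E H = h} *
        Nat.card {K : Submodule F X // Module.finrank F K = (r + 1) * h + 1} <
      Nat.card F ^ (((r + 1) * h + 1) * (Module.finrank F E * (r + 1))) := by
  have hE₈ : 8 ≤ Nat.card E :=
    (Nat.pow_le_pow_right two_pos hE).trans (two_pow_finrank_le_natCard F E)
  have hle := natCard_subspaces_mul_natCard_subspaces_le hE₈ (hX.trans (add_comm _ _)) hY
  set t := (r + 1) * h + r * ((r + 1) * h + 1)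
  have hexp : Nat.card F ^ (((r + 1) * h + 1) * (Module.finrank F E * (r + 1))) =
      Nat.card E ^ (t + 1) := by
    rw [Module.natCard_eq_pow_finrank (K := F) (V := E), ← pow_mul]
    congr 1
    ring
  have hpos : (0 : ℝ) < (Nat.card E : ℝ) ^ t := by positivity
  rw [hexp, ← Nat.cast_lt (α := ℝ), Nat.cast_mul, Nat.cast_pow]
  calc (Nat.card {H : Submodule E Y // Module.finrank E H = h} : ℝ) *
        Nat.card {K : Submodule F X // Module.finrank F K = (r + 1) * h + 1}
      < (Nat.card E : ℝ) ^ t * 8 := by linarith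
    _ ≤ (Nat.card E : ℝ) ^ t * Nat.card E := by gcongr; exact_mod_cast hE₈
    _ = (Nat.card E : ℝ) ^ (t + 1) := (pow_succ _ _).symm

variable [Module F Y] [IsScalarTower F E Y]

lemma exists_isEvasive_of_natCard_subspaces_lt {h c s : ℕ} (hY : Module.finrank E Y = h + c)
    (hcard : Nat.card {H : Submodule E Y // Module.finrank E H = h} *
        Nat.card {K : Submodule F X // Module.finrank F K = s + 1} <
      Nat.card F ^ ((s + 1) * (Module.finrank F E * c))) :
    ∃ G : X →ₗ[F] Y, IsEvasive E G h s := by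
  have : FiniteDimensional F Y := Module.Finite.trans E Y
  have : Finite X := Module.finite_of_finite F
  have : Finite Y := Module.finite_of_finite F
  let Pair := {H : Submodule E Y // Module.finrank E H = h} ×
    {K : Submodule F X // Module.finrank F K = s + 1}
  obtain ⟨G, hG⟩ := exists_forall_notMem_of_natCard_lt_index
    (fun p : Pair => (compatibleMaps p.2.1 (p.1.1.restrictScalars F)).toAddSubgroup) fun p => by
      rw [Nat.card_prod, index_compatibleMaps, p.2.2, finrank_quotient_restrictScalars,
        Submodule.finrank_quotient, hY, p.1.2, Nat.add_sub_cancel_left]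
      exact hcard
  refine ⟨G, fun H hH => ?_⟩
  by_contra! hlarge
  obtain ⟨K, -, hKG, hK⟩ := exists_submodule_between_finrank_eq
    (bot_le : ⊥ ≤ (H.restrictScalars F).comap G) (d := s + 1) (by simp) hlarge
  exact hG (⟨H, hH⟩, ⟨K, hK⟩) hKG

end Counting

section CuttingBlockingSets

lemma isCuttingBlocking_zero {R L : Type*} [DivisionRing R] [AddCommGroup L] [Module R L]
    [FiniteDimensional R L] {S : Set L} (hS : span R S = ⊤) : IsCuttingBlocking R S 0 := by
  intro V hV
  obtain rfl : V = ⊤ := eq_top_of_finrank_eq hV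
  rw [top_coe, Set.inter_univ, hS]

lemma IsCuttingBlocking.span_eq_top {R L : Type*} [DivisionRing R] [AddCommGroup L] [Module R L]
    [FiniteDimensional R L] {S : Set L} {r : ℕ} (hS : IsCuttingBlocking R S r)
    (hr : r < Module.finrank R L) : span R S = ⊤ := by
  refine eq_top_iff'.mpr fun v => ?_
  obtain ⟨V, hvV, -, hV⟩ := exists_submodule_between_finrank_eq (le_top : span R {v} ≤ ⊤)
    (d := Module.finrank R L - r)
    ((finrank_span_le_card {v}).trans (by rw [Set.toFinset_singleton, Finset.card_singleton]; lia))
    (by rw [finrank_top]; exact Nat.sub_le _ _)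
  exact span_mono Set.inter_subset_left ((hS V hV).ge (hvV (mem_span_singleton_self v)))

lemma exists_linearMap_injective_or_surjective (F X Y : Type*) [Field F] [AddCommGroup X]
    [Module F X] [FiniteDimensional F X] [AddCommGroup Y] [Module F Y] [FiniteDimensional F Y] :
    ∃ G : X →ₗ[F] Y, Function.Injective G ∨ Function.Surjective G := by
  rcases le_total (Module.finrank F X) (Module.finrank F Y) with hXY | hYX
  · obtain ⟨G, hG⟩ := finrank_le_iff_exists_linearMap.mp hXY
    exact ⟨G, .inl hG⟩
  · obtain ⟨f, hf⟩ := finrank_le_iff_exists_linearMap.mp hYX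
    obtain ⟨G, hG⟩ := f.exists_leftInverse_of_injective (LinearMap.ker_eq_bot.mpr hf)
    exact ⟨G, .inr fun y => ⟨f y, LinearMap.congr_fun hG y⟩⟩

variable {F E X Y : Type*} [Field F] [Field E]
  [AddCommGroup X] [Module F X] [FiniteDimensional F X]
  [AddCommGroup Y] [Module F Y] [Module E Y] [FiniteDimensional E Y]

lemma exists_span_range_eq_top (hXY : Module.finrank E Y ≤ Module.finrank F X) :
    ∃ G : X →ₗ[F] Y, span E (LinearMap.range G : Set Y) = ⊤ := by
  let bX := Module.finBasis F X
  let bY := Module.finBasis E Y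
  let G : X →ₗ[F] Y := bX.constr F (Function.extend (Fin.castLE hXY) bY 0)
  refine ⟨G, top_le_iff.mp (bY.span_eq.symm.trans_le (span_mono ?_))⟩
  rintro _ ⟨i, rfl⟩
  exact ⟨bX (Fin.castLE hXY i), by
    rw [bX.constr_basis, (Fin.castLE_injective hXY).extend_apply]⟩

variable [Algebra F E] [FiniteDimensional F E] [IsScalarTower F E Y]

lemma exists_isEvasive_of_finrank_le {h r : ℕ} (hE : Module.finrank F E ≤ r + 1)
    (hX : Module.finrank F X = Module.finrank F E * r + ((r + 1) * h + 1))
    (hY : Module.finrank E Y = h + (r + 1)) :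
    ∃ G : X →ₗ[F] Y, IsEvasive E G h ((r + 1) * h) := by
  have : FiniteDimensional F Y := Module.Finite.trans E Y
  have hpos : 0 < Module.finrank F E := Module.finrank_pos
  obtain ⟨G, hG | hG⟩ := exists_linearMap_injective_or_surjective F X Y
  · exact ⟨G, (isEvasive_of_injective hG h).mono (Nat.mul_le_mul_right h hE)⟩
  · refine ⟨G, (isEvasive_of_surjective hG h).mono ?_⟩
    rw [hX, hY, Nat.add_sub_cancel_left, mul_add_one]
    lia

theorem exists_isCuttingBlocking_range [Finite F] {h r : ℕ}
    (hX : Module.finrank F X = Module.finrank F E * r + ((r + 1) * h + 1))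
    (hY : Module.finrank E Y = h + (r + 1)) :
    ∃ G : X →ₗ[F] Y, IsCuttingBlocking E (LinearMap.range G : Set Y) r := by
  rcases Nat.eq_zero_or_pos r with rfl | hr
  · obtain ⟨G, hG⟩ := exists_span_range_eq_top (F := F) (E := E) (X := X) (Y := Y) (by lia)
    exact ⟨G, isCuttingBlocking_zero hG⟩
  obtain ⟨G, hG⟩ : ∃ G : X →ₗ[F] Y, IsEvasive E G h ((r + 1) * h) := by
    rcases le_or_gt (Module.finrank F E) (r + 1) with hE | hE
    · exact exists_isEvasive_of_finrank_le hE hX hY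
    · exact exists_isEvasive_of_natCard_subspaces_lt hY
        (natCard_subspaces_mul_natCard_subspaces_lt (by lia) hX hY)
  exact ⟨G, hG.isCuttingBlocking (by lia) hY⟩

end CuttingBlockingSets

section RankSupport

variable {F E : Type*} [Field F] [Field E] [Algebra F E] {n : ℕ}

lemma apply_comp_mem_of_mem_span_fIncl {U : Submodule F (Fin n → F)} {a : Fin n → E}
    (ha : a ∈ span E (fIncl F E n '' U)) (c : Module.Dual F E) : c ∘ a ∈ U := by
  induction ha using span_induction generalizing c with
  | mem _ hx =>
    obtain ⟨u, hu, rfl⟩ := hx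
    have : c ∘ fIncl F E n u = c 1 • u := by
      ext j
      simp [fIncl, Algebra.algebraMap_eq_smul_one, mul_comm]
    exact this ▸ U.smul_mem _ hu
  | zero =>
    convert! U.zero_mem
    ext j
    simp
  | add x y _ _ hx hy =>
    convert! U.add_mem (hx c) (hy c)
    ext j
    simp
  | smul b _ _ ih => exact ih (c ∘ₗ LinearMap.mulLeft F b)

variable [FiniteDimensional F E]

lemma mem_span_fIncl_of_forall_comp_mem {U : Submodule F (Fin n → F)} {a : Fin n → E}
    (ha : ∀ c : Module.Dual F E, c ∘ a ∈ U) : a ∈ span E (fIncl F E n '' U) := by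
  let b := Module.finBasis F E
  have hexpand : a = ∑ i, b i • fIncl F E n (b.coord i ∘ a) := by
    ext j
    simpa [fIncl, Algebra.smul_def, mul_comm] using (b.sum_repr (a j)).symm
  rw [hexpand]
  exact sum_mem fun i _ => smul_mem _ _ (subset_span ⟨_, ha _, rfl⟩)

lemma rankSupport_eq_span (A : Set (Fin n → E)) :
    rankSupport F E n A = span F {u | ∃ a ∈ A, ∃ c : Module.Dual F E, c ∘ a = u} := by
  refine le_antisymm (sInf_le fun a ha => ?_) (le_sInf fun U hU => span_le.mpr ?_)
  · exact mem_span_fIncl_of_forall_comp_mem fun c => subset_span ⟨a, ha, c, rfl⟩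
  · rintro _ ⟨a, ha, c, rfl⟩
    exact apply_comp_mem_of_mem_span_fIncl (hU ha) c

lemma rankSupport_le_ker_iff (A : Set (Fin n → E)) (x : Fin n → F) :
    rankSupport F E n A ≤ LinearMap.ker (Fintype.linearCombination F x) ↔
      ∀ a ∈ A, ∑ j, x j • a j = 0 := by
  have hdual (a : Fin n → E) : (∀ c : Module.Dual F E, c ∘ a ∈
      LinearMap.ker (Fintype.linearCombination F x)) ↔ ∑ j, x j • a j = 0 := by
    rw [← Module.forall_dual_apply_eq_zero_iff F]
    simp [Fintype.linearCombination_apply, mul_comm]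
  simp only [rankSupport_eq_span, span_le, ← hdual]
  exact ⟨fun h a ha c => h ⟨a, ha, c, rfl⟩, by rintro h _ ⟨a, ha, c, rfl⟩; exact h a ha c⟩

end RankSupport

section GeneratorMap

variable {F E Y : Type*} [Field F] [Field E] [AddCommGroup Y] [Module F Y] [Module E Y] {n : ℕ}

/-- The code generated by an `F`-linear map `G : F^n → Y`, whose columns are the vectors `G eⱼ`,
presented through its encoder: the message `f`, a linear form on `Y`, is sent to the codeword
`(f (G e₁), …, f (G eₙ))`. For `Y = E^k` this is multiplication by a `k × n` generator matrix. -/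
noncomputable def encoder (E : Type*) {F Y : Type*} [Field F] [Field E]
    [AddCommGroup Y] [Module F Y] [Module E Y] {n : ℕ}
    (G : (Fin n → F) →ₗ[F] Y) : Module.Dual E Y →ₗ[E] Fin n → E :=
  LinearMap.pi fun j => Module.Dual.eval E Y (G (Pi.single j 1))

lemma finrank_comap_encoder_add [FiniteDimensional E Y] {G : (Fin n → F) →ₗ[F] Y}
    (hG : Function.Injective (encoder E G)) {A : Submodule E (Fin n → E)}
    (hA : A ≤ LinearMap.range (encoder E G)) :
    Module.finrank E A + Module.finrank E (A.comap (encoder E G)).dualCoannihilator =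
      Module.finrank E Y := by
  rw [← Subspace.finrank_add_finrank_dualCoannihilator_eq (A.comap (encoder E G)),
    (equivMapOfInjective _ hG _).finrank_eq, map_comap_eq_self hA]

variable [Algebra F E] [IsScalarTower F E Y]

lemma sum_smul_encoder (G : (Fin n → F) →ₗ[F] Y) (f : Module.Dual E Y) (x : Fin n → F) :
    ∑ j, x j • encoder E G f j = f (G x) := by
  conv_rhs => rw [pi_eq_sum_univ' x]
  simp [encoder]

lemma encoder_injective {G : (Fin n → F) →ₗ[F] Y}
    (hG : span E (LinearMap.range G : Set Y) = ⊤) : Function.Injective (encoder E G) := by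
  rw [injective_iff_map_eq_zero]
  intro f hf
  refine LinearMap.ext_on hG ?_
  rintro _ ⟨x, rfl⟩
  simp [← sum_smul_encoder, hf]

lemma apply_mem_dualCoannihilator_comap_encoder_iff {G : (Fin n → F) →ₗ[F] Y}
    {A : Submodule E (Fin n → E)} (hA : A ≤ LinearMap.range (encoder E G)) (x : Fin n → F) :
    G x ∈ (A.comap (encoder E G)).dualCoannihilator ↔ ∀ a ∈ A, ∑ j, x j • a j = 0 := by
  simp only [mem_dualCoannihilator, mem_comap, ← sum_smul_encoder]
  refine ⟨fun h a ha => ?_, fun h f hf => h _ hf⟩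
  obtain ⟨f, rfl⟩ := hA ha
  exact h f ha

variable [FiniteDimensional F E]

/-- A subcode `D` corresponds to the subspace `V` of `Y` killed by its messages, and the relations
`∑ xⱼ dⱼ = 0` satisfied by `D`, equivalently by `χ(D)`, are the `x` with `G x ∈ V`. Cutting means
that `V` is recovered from these. -/
lemma eq_of_rankSupport_le [FiniteDimensional E Y] {G : (Fin n → F) →ₗ[F] Y} {r : ℕ}
    (hG : IsCuttingBlocking E (LinearMap.range G : Set Y) r) (hr : r < Module.finrank E Y)
    {B D : Submodule E (Fin n → E)} (hB : B ≤ LinearMap.range (encoder E G))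
    (hD : D ≤ LinearMap.range (encoder E G)) (hBr : Module.finrank E B = r)
    (hDr : Module.finrank E D = r)
    (hsupp : rankSupport F E n (B : Set (Fin n → E)) ≤ rankSupport F E n (D : Set (Fin n → E))) :
    B = D := by
  have hinj := encoder_injective (hG.span_eq_top hr)
  have hfinrank_B := finrank_comap_encoder_add hinj hB
  have hfinrank_D := finrank_comap_encoder_add hinj hD
  have hle : (D.comap (encoder E G)).dualCoannihilator ≤
      (B.comap (encoder E G)).dualCoannihilator := by
    rw [← hG (D.comap (encoder E G)).dualCoannihilator (by lia), span_le]
    rintro _ ⟨⟨x, rfl⟩, hx⟩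
    rw [SetLike.mem_coe, apply_mem_dualCoannihilator_comap_encoder_iff hD] at hx
    rw [SetLike.mem_coe, apply_mem_dualCoannihilator_comap_encoder_iff hB]
    exact (rankSupport_le_ker_iff _ x).mp (hsupp.trans ((rankSupport_le_ker_iff _ x).mpr hx))
  have hcoann := eq_of_le_of_finrank_eq hle (by lia)
  rw [← map_comap_eq_self hB, ← map_comap_eq_self hD,
    ← Subspace.dualCoannihilator_dualAnnihilator_eq (W := B.comap (encoder E G)), ← hcoann,
    Subspace.dualCoannihilator_dualAnnihilator_eq]

theorem isRMinimal_range_encoder [FiniteDimensional E Y] {G : (Fin n → F) →ₗ[F] Y} {r : ℕ}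
    (hG : IsCuttingBlocking E (LinearMap.range G : Set Y) r) (hr : r < Module.finrank E Y) :
    IsRMinimal F E n (LinearMap.range (encoder E G)) r := fun _ hD hDr _ hB hBD hsupp => by
  rw [eq_of_rankSupport_le hG hr hB hD (hBD.trans hDr) hDr hsupp]

end GeneratorMap

/-- Theorem 5.4: suppose `F` is finite; for `k ≥ r + 1` and
`n = mr + k(r+1) - r² - 2r`, there exists an `[n, k]` `r`-minimal code; in particular,
there is a cutting `r`-blocking set of `E^k` of `F`-dimension at most `n`, i.e.,
`ϖ_{E/F}(k, r) ≤ mr + k(r+1) - r² - 2r`. -/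
theorem statement19 (F E : Type*) [Field F] [Field E] [Algebra F E] [Fintype F]
    [FiniteDimensional F E] (m : ℕ) (hm : Module.finrank F E = m)
    (k r : ℕ) (hkr : r + 1 ≤ k)
    (n : ℕ) (hn : n = m * r + k * (r + 1) - r ^ 2 - 2 * r) :
    (∃ C : Submodule E (Fin n → E), Module.finrank E C = k ∧ IsRMinimal F E n C r) ∧
      ∃ U : Submodule F (Fin k → E),
        IsCuttingBlocking E (U : Set (Fin k → E)) r ∧ Module.finrank F U ≤ n := by
  obtain ⟨h, rfl⟩ := Nat.exists_eq_add_of_le' hkr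
  have hn' : n = Module.finrank F E * r + ((r + 1) * h + 1) := by
    have : m * r + (h + (r + 1)) * (r + 1) =
      m * r + ((r + 1) * h + 1) + r ^ 2 + 2 * r := by ring
    rw [hn, hm]
    lia
  obtain ⟨G, hG⟩ := exists_isCuttingBlocking_range (F := F) (E := E) (X := Fin n → F)
    (Y := Fin (h + (r + 1)) → E) (by rw [Module.finrank_fin_fun, hn']) (Module.finrank_fin_fun E)
  have hr : r < Module.finrank E (Fin (h + (r + 1)) → E) := by
    rw [Module.finrank_fin_fun]
    lia
  refine ⟨⟨LinearMap.range (encoder E G), ?_, isRMinimal_range_encoder hG hr⟩,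
    LinearMap.range G, hG, ?_⟩
  · rw [LinearMap.finrank_range_of_inj (encoder_injective (hG.span_eq_top hr)),
      Subspace.dual_finrank_eq, Module.finrank_fin_fun]
  · simpa using LinearMap.finrank_range_le G
end
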